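/- arXiv:1909.01516 — 2 statements merged into one kernel-verified Lean document; each statement's English description precedes it below -/
import Mathlib

section
/- Let H be a frustration-free Hamiltonian on a chain of n qudits as in the setup, with noncommutation degree g, L commuting layers, spectral gap γ, and local gaps γ(t). Suppose γ ≤ g²/4. Then for every integer t with 8L² < t < n/5, one has γ(t) ≤ 10³·L²·g²/t² + 6γ. The statement holds both for the closed chain and for the open chain (where H_n = 0). -/
open scoped ComplexOrder Fin.NatCast

variable {E : Type*} [NormedAddCommGroup E] [InnerProductSpace ℂ E] [FiniteDimensional ℂ E]

/-- An orthogonal projector: a self-adjoint idempotent operator. -/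
def IsProjector (P : E →L[ℂ] E) : Prop := IsSelfAdjoint P ∧ P * P = P

/-- The smallest nonzero (for a positive semidefinite operator, smallest positive)
eigenvalue of an operator. -/
noncomputable def minNonzeroEig (A : E →L[ℂ] E) : ℝ :=
  sInf {c : ℝ | 0 < c ∧ ∃ v : E, v ≠ 0 ∧ A v = (c : ℂ) • v}

/-- The Loewner order: `A ⪯ B` iff `B − A` is positive semidefinite. -/
def Loewner (A B : E →L[ℂ] E) : Prop := (B - A).IsPositive

/-- The contiguous (cyclic) segment of `t` qudits starting at qudit `a` of the chain. -/
def seg {n : ℕ} [NeZero n] (a : Fin n) (t : ℕ) : Finset (Fin n) :=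
  (Finset.range t).image (fun k : ℕ => a + (k : Fin n))

/-- The bond `(i, i+1)` lies inside the region `F`. -/
def bondIn {n : ℕ} [NeZero n] (i : Fin n) (F : Finset (Fin n)) : Prop := i ∈ F ∧ i + 1 ∈ F

instance {n : ℕ} [NeZero n] (F : Finset (Fin n)) : DecidablePred (fun i => bondIn i F) :=
  fun i => inferInstanceAs (Decidable (i ∈ F ∧ i + 1 ∈ F))

/-- A frustration-free nearest-neighbour Hamiltonian `H = Σ_{i=1}^n H_i`,
`H_i = Σ_j P_{ij}`, on a (cyclic) chain of `n` qudits whose joint Hilbert space is `E`: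
the `P_{ij}` are orthogonal projectors supported on the qudits `i, i+1`, each failing to
commute with at most `g` other members of the family, and the family is partitioned into
`L` layers of pairwise commuting projectors. -/
structure ChainSetup (n : ℕ) [NeZero n] (E : Type*) [NormedAddCommGroup E]
    [InnerProductSpace ℂ E] [FiniteDimensional ℂ E] where
  /-- the number of projectors making up the interaction `H_i` on the bond `(i, i+1)` -/
  m : Fin n → ℕ
  /-- the projectors `P_{ij}`, supported on the qudits `i, i+1` -/
  P : (i : Fin n) → Fin (m i) → (E →L[ℂ] E)
  /-- the noncommutation degree -/
  g : ℕ
  /-- the number of layers -/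
  L : ℕ
  /-- the assignment of each projector to a layer -/
  layer : ((i : Fin n) × Fin (m i)) → Fin L
  proj : ∀ i j, IsProjector (P i j)
  /-- operational form of two-body locality: interactions on disjoint bonds commute -/
  locality : ∀ (i i' : Fin n) (j : Fin (m i)) (j' : Fin (m i')),
    Disjoint ({i, i + 1} : Finset (Fin n)) ({i', i' + 1} : Finset (Fin n)) →
    Commute (P i j) (P i' j')
  /-- each projector fails to commute with at most `g` other members of the family -/
  gbound : ∀ p : (i : Fin n) × Fin (m i),
    Nat.card {q : (i : Fin n) × Fin (m i) // q ≠ p ∧ ¬ Commute (P p.1 p.2) (P q.1 q.2)} ≤ g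
  /-- projectors within each layer pairwise commute -/
  layers : ∀ p q : (i : Fin n) × Fin (m i), layer p = layer q →
    Commute (P p.1 p.2) (P q.1 q.2)
  /-- frustration-freeness: there is a nonzero state annihilated by every `P_{ij}` -/
  frustFree : ∃ v : E, v ≠ 0 ∧ ∀ i j, P i j v = 0

namespace ChainSetup

variable {n : ℕ} [NeZero n]

/-- the bond interaction `H_i = Σ_j P_{ij}` -/
noncomputable def Hbond (C : ChainSetup n E) (i : Fin n) : E →L[ℂ] E := ∑ j, C.P i j

/-- the full Hamiltonian `H = Σ_i H_i` -/
noncomputable def Hfull (C : ChainSetup n E) : E →L[ℂ] E := ∑ i, C.Hbond i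

/-- `h_F = Σ_{i : i,i+1 ∈ F} H_i`, the Hamiltonian restricted to the region `F` -/
noncomputable def hamOn (C : ChainSetup n E) (F : Finset (Fin n)) : E →L[ℂ] E :=
  ∑ i ∈ Finset.univ.filter (fun i => bondIn i F), C.Hbond i

/-- the spectral gap `γ` of `H` -/
noncomputable def gap (C : ChainSetup n E) : ℝ := minNonzeroEig C.Hfull

/-- The local gap `γ(t)`: the minimum of the spectral gaps of `h_S` over contiguous
segments `S` of length `t`.  For the open chain (`openBC = true`) only segments that do
not wrap around the end of the chain are allowed. -/
noncomputable def localGap (C : ChainSetup n E) (openBC : Bool) (t : ℕ) : ℝ :=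
  sInf {x : ℝ | ∃ a : Fin n, (openBC = true → (a : ℕ) + t ≤ n) ∧
    x = minNonzeroEig (C.hamOn (seg a t))}

/-- `Q_F`: the orthogonal projector onto the orthogonal complement of the ground space of
`h_F` (for `F = ∅` this is `0`). -/
noncomputable def Qproj (C : ChainSetup n E) (F : Finset (Fin n)) : E →L[ℂ] E :=
  (LinearMap.ker (C.hamOn F : E →ₗ[ℂ] E))ᗮ.subtypeL ∘L
    Submodule.orthogonalProjectionOnto (LinearMap.ker (C.hamOn F : E →ₗ[ℂ] E))ᗮ

end ChainSetup

/-- the cyclic successor on `Fin M` -/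
def cyc {M : ℕ} (k : Fin M) : Fin M := ⟨((k : ℕ) + 1) % M, Nat.mod_lt _ k.pos⟩

/-- A coarse-graining configuration with parameter `t` on a chain of `n` qudits:
`⌊n/t⌋` pairwise disjoint contiguous segments `S_k = seg (s k) t` of length `t` in cyclic
order, with `r_k ≤ t/4` qudits between consecutive segments, and pairwise disjoint
contiguous segments `T_k` of length `t` placed between consecutive `S`-segments, each
overlapping `S_k` and `S_{k+1}` in at least `⌊t/4⌋` qudits.  For the open chain, exactly the
last `T`-segment is empty, `S_1` starts at the first qudit and `S_{⌊n/t⌋}` ends at the last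
qudit. -/
structure CoarseGraining (n : ℕ) [NeZero n] (t : ℕ) where
  /-- the number of `S`-segments, `⌊n/t⌋` -/
  M : ℕ
  hM : M = n / t
  hMpos : 0 < M
  /-- the starting points of the `S`-segments -/
  s : Fin M → Fin n
  /-- the numbers `r_k` of qudits sandwiched between consecutive `S`-segments -/
  r : Fin M → ℕ
  hr : ∀ k, 4 * r k ≤ t
  /-- the `S`-segments appear in cyclic order, `S_{k+1}` starting `t + r_k` after `S_k` -/
  hs : ∀ k : Fin M, s (cyc k) = s k + ((t + r k : ℕ) : Fin n)
  hSdisj : ∀ k l : Fin M, k ≠ l → Disjoint (seg (s k) t) (seg (s l) t)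
  /-- the `T`-segments -/
  T : Fin M → Finset (Fin n)
  hT : ∀ k, (∃ a : Fin n, T k = seg a t) ∨ T k = ∅
  hTdisj : ∀ k l : Fin M, k ≠ l → Disjoint (T k) (T l)
  hoverlap₁ : ∀ k, T k ≠ ∅ → t / 4 ≤ ((seg (s k) t) ∩ T k).card
  hoverlap₂ : ∀ k, T k ≠ ∅ → t / 4 ≤ ((seg (s (cyc k)) t) ∩ T k).card
  /-- only the last `T`-segment may be empty (the open-chain case), and in that case
  `S_1` starts at the first qudit and `S_M` ends at the last qudit -/
  hTempty : ∀ k, T k = ∅ → (k : ℕ) = M - 1 ∧ (s ⟨0, hMpos⟩ : ℕ) = 0 ∧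
    (s ⟨M - 1, Nat.sub_lt hMpos one_pos⟩ : ℕ) + t = n

namespace ChainSetup

variable {n : ℕ} [NeZero n]

/-- the coarse-grained Hamiltonian `H̄(t) = Σ_k (Q_{S_k} + Q_{T_k})` -/
noncomputable def coarseHam (C : ChainSetup n E) (t : ℕ) (G : CoarseGraining n t) :
    E →L[ℂ] E :=
  ∑ k, (C.Qproj (seg (G.s k) t) + C.Qproj (G.T k))

/-- the coarse-grained detectability operator
`DL(t) = (∏_k (1 − Q_{S_k}))·(∏_k (1 − Q_{T_k}))` -/
noncomputable def coarseDL (C : ChainSetup n E) (t : ℕ) (G : CoarseGraining n t) :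
    E →L[ℂ] E :=
  ((List.finRange G.M).map (fun k => 1 - C.Qproj (seg (G.s k) t))).prod *
    ((List.finRange G.M).map (fun k => 1 - C.Qproj (G.T k))).prod

/-- the detectability-lemma operator `DL(H) = ∏_{α=1}^L ∏_{(i,j) ∈ T_α} (1 − P_{ij})`,
taken layer by layer -/
noncomputable def DLHam (C : ChainSetup n E) : E →L[ℂ] E :=
  ((List.finRange C.L).map (fun α =>
    (Finset.univ.filter (fun p : (i : Fin n) × Fin (C.m i) => C.layer p = α)).noncommProd
      (fun p => 1 - C.P p.1 p.2)
      (fun p hp q hq _ =>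
        Commute.sub_left (Commute.one_left _)
          (Commute.sub_right (Commute.one_right _)
            (C.layers p q (by
              simp only [Finset.coe_filter, Set.mem_setOf_eq] at hp hq
              rw [hp.2, hq.2])))))).prod

end ChainSetup

/-!
Cover the chain by two families of disjoint segments of length `t`, each containing the bonds near
those missed by the other, with ground-space projections `A` and `B`, and let `Π` project onto the
ground space of `H`. If `ψ` is an eigenvector at the gap `γ`, then `‖Aψ‖² + ‖Bψ‖² ≤ (1 + κ) ‖ψ‖²`
with `κ = ‖AB - Π‖`, while a state outside the ground space of a family costs energy `γ(t)`, so
`γ(t) (‖ψ‖² - ‖Aψ‖²) ≤ ⟨ψ, Hψ⟩ = γ ‖ψ‖²` and likewise for `B`. Adding up, `γ(t) (1 - κ) ≤ 2 γ`.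

To bound `κ`, let `D` be the layerwise product of the `1 - P i j`. By the detectability lemma `D`
shrinks the excited space by the factor `1 / √(1 + γ / g²)`. Every factor of `(D⋆ D) ^ j` is
absorbed by `A` or, while the light cone of the bonds missed by `A` stays inside `B`'s segments, by
`B`; hence `A (D⋆ D) ^ j B = A B` for all `j ≤ m ≈ t / (8 L)`. Inserting a Chebyshev polynomial of
degree `m` in `D⋆ D` gives `κ ≤ 1 / (1 + 2 m² γ / g²)`, whence `γ(t) ≤ 2 γ + g² / m²`.
-/

section OrderedProduct

variable {ι R : Type*} [Ring R]

/-- The ordered product `(1 - P p₁) * (1 - P p₂) * ⋯` along the list `[p₁, p₂, …]`.  For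
projectors this is the detectability operator of the family in the chosen order. -/
def complProd (P : ι → R) (l : List ι) : R := (l.map fun p => 1 - P p).prod

lemma complProd_nil (P : ι → R) : complProd P [] = 1 := rfl

lemma complProd_cons (P : ι → R) (q : ι) (l : List ι) :
    complProd P (q :: l) = (1 - P q) * complProd P l := List.prod_cons

lemma complProd_append (P : ι → R) (l l' : List ι) :
    complProd P (l ++ l') = complProd P l * complProd P l' := by
  simp only [complProd, List.map_append, List.prod_append]

lemma star_complProd [StarRing R] {P : ι → R} (hP : ∀ p, IsSelfAdjoint (P p)) (l : List ι) :
    star (complProd P l) = complProd P l.reverse := by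
  induction l with
  | nil => exact star_one R
  | cons q l ih =>
    rw [complProd_cons, star_mul, ih, List.reverse_cons, complProd_append, complProd_cons,
      complProd_nil, mul_one, star_sub, star_one, (hP q).star_eq]

lemma complProd_mul_eq_self {P : ι → R} {Q : R} (h : ∀ p, P p * Q = 0) (l : List ι) :
    complProd P l * Q = Q := by
  induction l with
  | nil => rw [complProd_nil, one_mul]
  | cons q l ih => rw [complProd_cons, mul_assoc, ih, sub_mul, one_mul, h, sub_zero]

lemma mul_complProd_eq_self {P : ι → R} {Q : R} (h : ∀ p, Q * P p = 0) (l : List ι) :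
    Q * complProd P l = Q := by
  induction l with
  | nil => rw [complProd_nil, mul_one]
  | cons q l ih => rw [complProd_cons, ← mul_assoc, mul_sub, mul_one, h, sub_zero, ih]

/-- Each factor `1 - P q` is either swallowed by `Z` on its left, or can be carried to `B` on its
right while preserving what `Z` annihilates. -/
lemma mul_complProd_mul {P : ι → R} {B Z : R} {S : Set ι} {l : List ι}
    (hl : ∀ q ∈ l, q ∈ S ∨ P q * B = 0 ∧ ∀ p ∈ S, Commute (P p) (P q))
    (hZ : ∀ p ∈ S, Z * P p = 0) :
    (∀ p ∈ S, Z * complProd P l * P p = 0) ∧ Z * complProd P l * B = Z * B := by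
  induction l generalizing Z with
  | nil => simpa only [complProd_nil, mul_one, and_true] using hZ
  | cons q l ih =>
    obtain ⟨hq, hl⟩ := List.forall_mem_cons.mp hl
    rw [complProd_cons, ← mul_assoc, mul_sub, mul_one]
    rcases hq with hqS | ⟨hqB, hqS⟩
    · rw [hZ q hqS, sub_zero]
      exact ih hl hZ
    · have hZq : ∀ p ∈ S, (Z - Z * P q) * P p = 0 := fun p hp => by
        rw [sub_mul, mul_assoc, ← (hqS p hp).eq, ← mul_assoc, hZ p hp, zero_mul, sub_zero]
      obtain ⟨hS, hB⟩ := ih hl hZq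
      exact ⟨hS, by rw [hB, sub_mul, mul_assoc, hqB, mul_zero, sub_zero]⟩

end OrderedProduct

section LightCone

variable {ι R : Type*} [Ring R]

/-- The indices reachable from `U` in at most `k` steps of noncommutation.  The complement of
`lightCone P U k` is still annihilated from the left after `k` layers of commuting factors
`1 - P p` have been applied to an element annihilating `Uᶜ`. -/
def lightCone (P : ι → R) (U : Set ι) : ℕ → Set ι
  | 0 => U
  | k + 1 => lightCone P U k ∪ {p | ∃ q ∈ lightCone P U k, ¬Commute (P p) (P q)}

/-- Multiplication by `W` on the right spreads the light cone by at most `a` steps and is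
invisible in front of `B`, as long as the light cone has grown by no more than `N` steps. -/
def LightConeAbsorbs (P : ι → R) (U : Set ι) (B : R) (N : ℕ) (W : R) (a : ℕ) : Prop :=
  ∀ ⦃k : ℕ⦄ ⦃Z : R⦄, k + a ≤ N → (∀ p ∉ lightCone P U k, Z * P p = 0) →
    (∀ p ∉ lightCone P U (k + a), Z * W * P p = 0) ∧ Z * W * B = Z * B

variable {P : ι → R} {U : Set ι} {B : R} {N : ℕ}

namespace LightConeAbsorbs

lemma one : LightConeAbsorbs P U B N 1 0 := fun k Z _ hZ => by
  simpa only [mul_one, add_zero, and_true] using hZ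

lemma mul {W W' : R} {a a' : ℕ} (h : LightConeAbsorbs P U B N W a)
    (h' : LightConeAbsorbs P U B N W' a') :
    LightConeAbsorbs P U B N (W * W') (a + a') := fun k Z hk hZ => by
  obtain ⟨hZW, hB⟩ := h (by omega) hZ
  obtain ⟨hZWW', hB'⟩ := h' (k := k + a) (by omega) hZW
  rw [← mul_assoc, ← add_assoc]
  exact ⟨hZWW', hB'.trans hB⟩

lemma pow {W : R} {a : ℕ} (h : LightConeAbsorbs P U B N W a) (j : ℕ) :
    LightConeAbsorbs P U B N (W ^ j) (j * a) := by
  induction j with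
  | zero => simpa only [pow_zero, zero_mul] using one
  | succ j ih => simpa only [pow_succ, Nat.succ_mul] using ih.mul h

lemma complProd_layer (hB : ∀ k < N, ∀ p ∈ lightCone P U k, P p * B = 0) {l : List ι}
    (hl : ∀ p ∈ l, ∀ q ∈ l, Commute (P p) (P q)) : LightConeAbsorbs P U B N (complProd P l) 1 := by
  intro k Z hk hZ
  let S : Set ι := (lightCone P U (k + 1))ᶜ ∪ {p ∈ (lightCone P U k)ᶜ | p ∈ l}
  have hZS : ∀ p ∈ S, Z * P p = 0 := by
    rintro p (hp | hp)
    · exact hZ p fun hpk => hp (Or.inl hpk)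
    · exact hZ p hp.1
  have hlS : ∀ q ∈ l, q ∈ S ∨ P q * B = 0 ∧ ∀ p ∈ S, Commute (P p) (P q) := by
    intro q hq
    by_cases hqk : q ∈ lightCone P U k
    · refine Or.inr ⟨hB k hk q hqk, ?_⟩
      rintro p (hp | hp)
      · by_contra hpq
        exact hp (Or.inr ⟨q, hqk, hpq⟩)
      · exact hl p hp.2 q hq
    · exact Or.inl (Or.inr ⟨hqk, hq⟩)
  obtain ⟨hS, hZB⟩ := mul_complProd_mul hlS hZS
  exact ⟨fun p hp => hS p (Or.inl hp), hZB⟩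

lemma complProd_flatten (hB : ∀ k < N, ∀ p ∈ lightCone P U k, P p * B = 0) {w : List (List ι)}
    (hw : ∀ l ∈ w, ∀ p ∈ l, ∀ q ∈ l, Commute (P p) (P q)) :
    LightConeAbsorbs P U B N (complProd P w.flatten) w.length := by
  induction w with
  | nil => exact one
  | cons l w ih =>
    obtain ⟨hl, hw⟩ := List.forall_mem_cons.mp hw
    rw [List.flatten_cons, complProd_append, List.length_cons, add_comm]
    exact (complProd_layer hB hl).mul (ih hw)

end LightConeAbsorbs

lemma mul_pow_star_complProd_mul [StarRing R] (hP : ∀ p, IsSelfAdjoint (P p)) {A : R}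
    (hA : ∀ p ∉ U, A * P p = 0) (hB : ∀ k < N, ∀ p ∈ lightCone P U k, P p * B = 0)
    {w : List (List ι)} (hw : ∀ l ∈ w, ∀ p ∈ l, ∀ q ∈ l, Commute (P p) (P q)) {j : ℕ}
    (hj : j * (w.length + w.length) ≤ N) :
    A * (star (complProd P w.flatten) * complProd P w.flatten) ^ j * B = A * B := by
  have hD := LightConeAbsorbs.complProd_flatten hB hw
  have hD' : LightConeAbsorbs P U B N (star (complProd P w.flatten)) w.length := by
    have hrev : ∀ l ∈ (w.map List.reverse).reverse, ∀ p ∈ l, ∀ q ∈ l, Commute (P p) (P q) := by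
      intro l hl p hp q hq
      obtain ⟨l', hl', rfl⟩ := List.mem_map.mp (List.mem_reverse.mp hl)
      exact hw l' hl' p (List.mem_reverse.mp hp) q (List.mem_reverse.mp hq)
    rw [star_complProd hP, List.reverse_flatten]
    simpa only [List.length_reverse, List.length_map] using
      LightConeAbsorbs.complProd_flatten hB hrev
  exact ((hD'.mul hD).pow j (k := 0) (by omega) hA).2

end LightCone

lemma sum_sq_sum_filter_le {ι : Type*} [Fintype ι] {r : ι → ι → Prop} [DecidableRel r]
    (hr : Std.Symm r) {g : ℕ} (hg : ∀ p, (Finset.univ.filter (r p)).card ≤ g) (a : ι → ℝ) :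
    ∑ p, (∑ q with r p q, a q) ^ 2 ≤ (g : ℝ) ^ 2 * ∑ q, a q ^ 2 :=
  have hcard : ∀ p, ((Finset.univ.filter (r p)).card : ℝ) ≤ g := fun p => by exact_mod_cast hg p
  calc ∑ p, (∑ q with r p q, a q) ^ 2
      ≤ ∑ p, g * ∑ q with r p q, a q ^ 2 := Finset.sum_le_sum fun p _ =>
        sq_sum_le_card_mul_sum_sq.trans <|
          mul_le_mul_of_nonneg_right (hcard p) (Finset.sum_nonneg fun q _ => sq_nonneg (a q))
    _ = g * ∑ q, ∑ p with r q p, a q ^ 2 := by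
        rw [← Finset.mul_sum]
        congr 1
        refine Finset.sum_comm' fun p q => ?_
        simp only [Finset.mem_univ, Finset.mem_filter, true_and, and_true]
        exact ⟨hr.symm p q, hr.symm q p⟩
    _ ≤ g * ∑ q, g * a q ^ 2 := by
        gcongr with q
        rw [Finset.sum_const, nsmul_eq_mul]
        exact mul_le_mul_of_nonneg_right (hcard q) (sq_nonneg (a q))
    _ = (g : ℝ) ^ 2 * ∑ q, a q ^ 2 := by rw [← Finset.mul_sum, ← mul_assoc, sq]

section StarProjection

variable {𝕜 V : Type*} [RCLike 𝕜] [NormedAddCommGroup V] [InnerProductSpace 𝕜 V] [CompleteSpace V]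
  {P : V →L[𝕜] V}

lemma re_inner_apply_self_of_isStarProjection (hP : IsStarProjection P) (x : V) :
    RCLike.re (inner 𝕜 x (P x)) = ‖P x‖ ^ 2 := by
  rw [← inner_self_eq_norm_sq (𝕜 := 𝕜)]
  conv_lhs => rw [← hP.isIdempotentElem.eq, mul_apply_eq_comp]
  rw [← hP.isSelfAdjoint.isSymmetric.apply_clm]

lemma norm_one_sub_apply_sq (hP : IsStarProjection P) (x : V) :
    ‖(1 - P) x‖ ^ 2 = ‖x‖ ^ 2 - ‖P x‖ ^ 2 := by
  rw [sub_apply, one_apply_eq_self, norm_sub_sq (𝕜 := 𝕜),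
    re_inner_apply_self_of_isStarProjection hP]
  ring

lemma norm_apply_le_of_isStarProjection (hP : IsStarProjection P) (x : V) : ‖P x‖ ≤ ‖x‖ := by
  have := norm_one_sub_apply_sq hP x
  exact le_of_sq_le_sq (by linarith [sq_nonneg ‖(1 - P) x‖]) (norm_nonneg x)

end StarProjection

section Detectability

variable {𝕜 ι V : Type*} [RCLike 𝕜] [NormedAddCommGroup V] [InnerProductSpace 𝕜 V]

open Classical in
/-- The norm `‖P q (complProd P l' ψ)‖` of the part of the state removed by the factor `1 - P q`
of `complProd P l`, where `l'` lists the factors acting before it; zero if `q` is not in `l`. -/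
noncomputable def stepLoss (P : ι → V →L[𝕜] V) (ψ : V) : List ι → ι → ℝ
  | [], _ => 0
  | q :: l, r => if r = q then ‖P q (complProd P l ψ)‖ else stepLoss P ψ l r

variable {P : ι → V →L[𝕜] V} {ψ : V} {l : List ι}

lemma stepLoss_cons_self (q : ι) : stepLoss P ψ (q :: l) q = ‖P q (complProd P l ψ)‖ :=
  if_pos rfl

lemma stepLoss_cons_of_ne {q r : ι} (h : r ≠ q) :
    stepLoss P ψ (q :: l) r = stepLoss P ψ l r :=
  if_neg h

lemma stepLoss_nonneg (r : ι) : 0 ≤ stepLoss P ψ l r := by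
  induction l with
  | nil => exact le_rfl
  | cons q l ih =>
    rw [stepLoss]
    split_ifs
    exacts [norm_nonneg _, ih]

lemma stepLoss_of_notMem {r : ι} (hr : r ∉ l) : stepLoss P ψ l r = 0 := by
  induction l with
  | nil => rfl
  | cons q l ih =>
    rw [stepLoss_cons_of_ne (List.ne_of_not_mem_cons hr), ih (List.not_mem_of_not_mem_cons hr)]

lemma stepLoss_le_cons {q : ι} (hq : q ∉ l) (r : ι) :
    stepLoss P ψ l r ≤ stepLoss P ψ (q :: l) r := by
  rcases eq_or_ne r q with rfl | hrq
  · exact (stepLoss_of_notMem hq).trans_le (stepLoss_nonneg r)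
  · exact (stepLoss_cons_of_ne hrq).ge

variable [CompleteSpace V] [Fintype ι]

lemma sum_sq_stepLoss (hP : ∀ p, IsStarProjection (P p)) (hl : l.Nodup) :
    ∑ q, stepLoss P ψ l q ^ 2 = ‖ψ‖ ^ 2 - ‖complProd P l ψ‖ ^ 2 := by
  classical
  induction l with
  | nil => simp [stepLoss, complProd_nil]
  | cons q l ih =>
    obtain ⟨hq, hl⟩ := List.nodup_cons.mp hl
    have hstep : ∑ r, stepLoss P ψ (q :: l) r ^ 2 =
        ‖P q (complProd P l ψ)‖ ^ 2 + ∑ r, stepLoss P ψ l r ^ 2 := by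
      rw [Fintype.sum_eq_add_sum_compl q, Fintype.sum_eq_add_sum_compl (a := q),
        stepLoss_cons_self, stepLoss_of_notMem hq, zero_pow two_ne_zero, zero_add]
      congr 1
      refine Finset.sum_congr rfl fun r hr => ?_
      rw [stepLoss_cons_of_ne (by simpa using hr)]
    rw [hstep, ih hl, complProd_cons, mul_apply_eq_comp,
      norm_one_sub_apply_sq (hP q)]
    ring

open Classical in
lemma norm_apply_complProd_le (hP : ∀ p, IsStarProjection (P p)) (hl : l.Nodup) {p : ι}
    (hp : p ∈ l) :
    ‖P p (complProd P l ψ)‖ ≤ ∑ q with ¬Commute (P p) (P q), stepLoss P ψ l q := by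
  induction l with
  | nil => exact absurd hp List.not_mem_nil
  | cons q l ih =>
    obtain ⟨hq, hl⟩ := List.nodup_cons.mp hl
    rw [complProd_cons, ← mul_apply_eq_comp, ← mul_assoc]
    rcases List.mem_cons.mp hp with rfl | hp
    · rw [(hP p).mul_one_sub_self, zero_mul, zero_apply, norm_zero]
      exact Finset.sum_nonneg fun r _ => stepLoss_nonneg r
    have hpl := ih hl hp
    by_cases hc : Commute (P p) (P q)
    · rw [(Commute.one_right (P p)).sub_right hc, mul_assoc]
      exact (norm_apply_le_of_isStarProjection (hP q).one_sub _).trans <|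
        hpl.trans (Finset.sum_le_sum fun r _ => stepLoss_le_cons hq r)
    · have hqmem : q ∈ Finset.univ.filter fun q => ¬Commute (P p) (P q) := by simpa using hc
      rw [← Finset.add_sum_erase _ _ hqmem, stepLoss_of_notMem hq, zero_add] at hpl
      rw [← Finset.add_sum_erase _ _ hqmem, stepLoss_cons_self, mul_sub, mul_one, sub_mul]
      calc ‖P p (complProd P l ψ) - P p (P q (complProd P l ψ))‖
          ≤ ‖P p (P q (complProd P l ψ))‖ + ‖P p (complProd P l ψ)‖ :=
            (norm_sub_le _ _).trans_eq (add_comm _ _)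
        _ ≤ _ := add_le_add (norm_apply_le_of_isStarProjection (hP p) _) <|
            hpl.trans (Finset.sum_le_sum fun r _ => stepLoss_le_cons hq r)

open Classical in
lemma sum_norm_apply_complProd_sq_le (hP : ∀ p, IsStarProjection (P p)) {g : ℕ}
    (hg : ∀ p, (Finset.univ.filter fun q => ¬Commute (P p) (P q)).card ≤ g)
    (hl : l.Nodup) (hmem : ∀ p, p ∈ l) (ψ : V) :
    ∑ p, ‖P p (complProd P l ψ)‖ ^ 2 ≤
      (g : ℝ) ^ 2 * (‖ψ‖ ^ 2 - ‖complProd P l ψ‖ ^ 2) :=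
  calc ∑ p, ‖P p (complProd P l ψ)‖ ^ 2
      ≤ ∑ p, (∑ q with ¬Commute (P p) (P q), stepLoss P ψ l q) ^ 2 :=
        Finset.sum_le_sum fun p _ =>
          pow_le_pow_left₀ (norm_nonneg _) (norm_apply_complProd_le hP hl (hmem p)) 2
    _ ≤ (g : ℝ) ^ 2 * ∑ q, stepLoss P ψ l q ^ 2 :=
        sum_sq_sum_filter_le ⟨fun _ _ h h' => h h'.symm⟩ hg _
    _ = _ := by rw [sum_sq_stepLoss hP hl]

end Detectability

section Chebyshev

open Polynomial

lemma one_add_sq_mul_le_eval_chebyshevT {x : ℝ} (hx : 0 ≤ x) (m : ℕ) :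
    1 + (m : ℝ) ^ 2 * x ≤ (Chebyshev.T ℝ m).eval (1 + x) := by
  suffices h : 1 + (m : ℝ) ^ 2 * x ≤ (Chebyshev.T ℝ m).eval (1 + x) ∧
      (2 * m + 1) * x ≤
        (Chebyshev.T ℝ (m + 1)).eval (1 + x) - (Chebyshev.T ℝ m).eval (1 + x) from h.1
  induction m with
  | zero => simp
  | succ m ih =>
    obtain ⟨hm, hincr⟩ := ih
    have hrec := congrArg (eval (1 + x)) (Chebyshev.T_add_two ℝ (m : ℤ))
    simp only [eval_sub, eval_mul, eval_X, eval_ofNat] at hrec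
    have hm' : 1 + ((m : ℝ) + 1) ^ 2 * x ≤ (Chebyshev.T ℝ (m + 1)).eval (1 + x) := by linarith
    push_cast
    refine ⟨hm', ?_⟩
    rw [add_assoc (m : ℤ), one_add_one_eq_two, hrec]
    nlinarith [mul_nonneg (sq_nonneg ((m : ℝ) + 1)) hx]

/-- The Chebyshev polynomial `T_m`, transported from `[-1, 1]` to `[0, 1 / (1 + ε)]` and
normalized to take the value `1` at `1`. -/
noncomputable def scaledChebyshev (ε : ℝ) (m : ℕ) : ℝ[X] :=
  C ((Chebyshev.T ℝ m).eval (1 + 2 * ε))⁻¹ *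
    (Chebyshev.T ℝ m).comp (C (2 * (1 + ε)) * X - C 1)

lemma natDegree_scaledChebyshev_le (ε : ℝ) (m : ℕ) : (scaledChebyshev ε m).natDegree ≤ m := by
  have hlin : (C (2 * (1 + ε)) * X - C 1 : ℝ[X]).natDegree ≤ 1 := by compute_degree
  refine (natDegree_C_mul_le _ _).trans (natDegree_comp_le.trans ?_)
  rw [Chebyshev.natDegree_T, Int.natAbs_natCast]
  exact mul_le_of_le_one_right (Nat.zero_le m) hlin

variable {ε : ℝ}

lemma one_add_le_eval_chebyshevT (hε : 0 ≤ ε) (m : ℕ) :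
    1 + 2 * (m : ℝ) ^ 2 * ε ≤ (Chebyshev.T ℝ m).eval (1 + 2 * ε) := by
  linarith [one_add_sq_mul_le_eval_chebyshevT (mul_nonneg zero_le_two hε) m]

lemma eval_one_scaledChebyshev (hε : 0 ≤ ε) (m : ℕ) : (scaledChebyshev ε m).eval 1 = 1 := by
  have hpos : 0 < (Chebyshev.T ℝ m).eval (1 + 2 * ε) :=
    lt_of_lt_of_le (by positivity) (one_add_le_eval_chebyshevT hε m)
  have harg : 2 * (1 + ε) * 1 - 1 = 1 + 2 * ε := by ring
  simp only [scaledChebyshev, eval_mul, eval_C, eval_comp, eval_sub, eval_X, harg]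
  exact inv_mul_cancel₀ hpos.ne'

lemma abs_eval_scaledChebyshev_le (hε : 0 ≤ ε) (m : ℕ) {x : ℝ} (hx : 0 ≤ x)
    (hx1 : (1 + ε) * x ≤ 1) :
    |(scaledChebyshev ε m).eval x| ≤ 1 / (1 + 2 * (m : ℝ) ^ 2 * ε) := by
  have hden : 0 < 1 + 2 * (m : ℝ) ^ 2 * ε := by positivity
  have hT := one_add_le_eval_chebyshevT hε m
  have hnum : |(Chebyshev.T ℝ m).eval (2 * (1 + ε) * x - 1)| ≤ 1 := by
    refine Chebyshev.abs_eval_T_real_le_one m (abs_le.mpr ⟨?_, ?_⟩)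
    · linarith [mul_nonneg (add_nonneg zero_le_one hε) hx]
    · linarith
  simp only [scaledChebyshev, eval_mul, eval_C, eval_comp, eval_sub, eval_X]
  rw [abs_mul, abs_inv, abs_of_pos (hden.trans_le hT), inv_mul_eq_div]
  exact div_le_div₀ zero_le_one hnum hden hT

/-- On the spectrum of `a`, a subset of `[0, 1 / (1 + ε)]`, the polynomial is uniformly small. -/
lemma norm_aeval_scaledChebyshev_le {R : Type*} [CStarAlgebra R] [PartialOrder R]
    [StarOrderedRing R] (hε : 0 ≤ ε) (m : ℕ) {a : R} (ha : 0 ≤ a) (ha1 : (1 + ε) * ‖a‖ ≤ 1) :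
    ‖aeval a (scaledChebyshev ε m)‖ ≤ 1 / (1 + 2 * (m : ℝ) ^ 2 * ε) := by
  rcases subsingleton_or_nontrivial R with _ | _
  · rw [Subsingleton.elim (aeval a _) 0, norm_zero]
    positivity
  rw [← cfc_polynomial (R := ℝ) _ a (IsSelfAdjoint.of_nonneg ha)]
  refine norm_cfc_le (by positivity) fun x hx => ?_
  have hxa : x ≤ ‖a‖ := (le_abs_self x).trans (spectrum.norm_le_norm_of_mem hx)
  exact abs_eval_scaledChebyshev_le hε m (spectrum_nonneg_of_nonneg ha hx)
    ((mul_le_mul_of_nonneg_left hxa (add_nonneg zero_le_one hε)).trans ha1)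

lemma mul_aeval_mul {S R : Type*} [CommSemiring S] [Semiring R] [Algebra S R] {a b k : R}
    {m : ℕ} (h : ∀ j ≤ m, a * k ^ j * b = a * b) {p : S[X]} (hp : p.natDegree ≤ m) :
    a * aeval k p * b = p.eval 1 • (a * b) := by
  rw [aeval_eq_sum_range, eval_eq_sum_range, Finset.mul_sum, Finset.sum_mul, Finset.sum_smul]
  refine Finset.sum_congr rfl fun j hj => ?_
  rw [mul_smul_comm, smul_mul_assoc, one_pow, mul_one,
    h j ((Finset.mem_range_succ_iff.mp hj).trans hp)]

end Chebyshev

section SpectralGap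

/-- A nonnegative element `a` has no spectrum in `(0, γ)`, phrased in the Loewner order as
`γ a ≤ a²`. -/
def HasSpectralGap {R : Type*} [Semiring R] [SMul ℝ R] [LE R] (a : R) (γ : ℝ) : Prop :=
  γ • a ≤ a * a

lemma HasSpectralGap.mono {R : Type*} [CStarAlgebra R] [PartialOrder R] [StarOrderedRing R] {a : R}
    {γ γ' : ℝ} (hgap : HasSpectralGap a γ) (ha : 0 ≤ a) (hγ : γ' ≤ γ) : HasSpectralGap a γ' :=
  (smul_le_smul_of_nonneg_right hγ ha).trans hgap

lemma HasSpectralGap.sum {R κ : Type*} [CStarAlgebra R] [PartialOrder R] [StarOrderedRing R]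
    {s : Finset κ} {a : κ → R} {γ : ℝ} (ha : ∀ k ∈ s, 0 ≤ a k)
    (hgap : ∀ k ∈ s, HasSpectralGap (a k) γ)
    (hcomm : ∀ k ∈ s, ∀ l ∈ s, Commute (a k) (a l)) : HasSpectralGap (∑ k ∈ s, a k) γ := by
  rw [HasSpectralGap, Finset.smul_sum, Finset.sum_mul_sum]
  refine Finset.sum_le_sum fun k hk => (hgap k hk).trans ?_
  exact Finset.single_le_sum (f := fun l => a k * a l)
    (fun l hl => (hcomm k hk l hl).mul_nonneg (ha k hk) (ha l hl)) hk

section Hilbert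

variable {V : Type*} [NormedAddCommGroup V] [InnerProductSpace ℂ V] {T : V →L[ℂ] V} {γ : ℝ}

lemma minNonzeroEig_nonneg (T : V →L[ℂ] V) : 0 ≤ minNonzeroEig T :=
  Real.sInf_nonneg fun _ hc => hc.1.le

lemma minNonzeroEig_zero : minNonzeroEig (0 : V →L[ℂ] V) = 0 := by
  have hempty : {c : ℝ | 0 < c ∧ ∃ v : V, v ≠ 0 ∧ (0 : V →L[ℂ] V) v = (c : ℂ) • v} = ∅ := by
    refine Set.eq_empty_of_forall_notMem ?_
    rintro c ⟨hc, v, hv, hcv⟩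
    exact smul_ne_zero (Complex.ofReal_ne_zero.mpr hc.ne') hv hcv.symm
  rw [minNonzeroEig, hempty, Real.sInf_empty]

lemma re_inner_apply_le_of_le {S T : V →L[ℂ] V} (h : S ≤ T) (x : V) :
    RCLike.re (inner ℂ x (S x)) ≤ RCLike.re (inner ℂ x (T x)) := by
  have hpos := ((ContinuousLinearMap.le_def S T).mp h).re_inner_nonneg_right x
  rwa [sub_apply, inner_sub_right, map_sub, sub_nonneg] at hpos

variable [CompleteSpace V]

lemma ker_sqrt (hT : 0 ≤ T) : (CFC.sqrt T).ker = T.ker := by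
  have hsa := IsSelfAdjoint.of_nonneg (CFC.sqrt_nonneg T)
  rw [← ContinuousLinearMap.ker_adjoint_comp_self, hsa.adjoint_eq]
  exact congrArg (fun S : V →L[ℂ] V => S.ker) (CFC.sqrt_mul_sqrt_self T)

/-- The inequality holds on the range of `√T`, where it is `γ T ≤ T²`, hence on the closure
`(ker T)ᗮ` of that range. -/
lemma HasSpectralGap.mul_norm_sq_le_of_mem_orthogonal_ker (hT : 0 ≤ T)
    (hgap : HasSpectralGap T γ) {y : V} (hy : y ∈ T.kerᗮ) :
    γ * ‖y‖ ^ 2 ≤ RCLike.re (inner ℂ y (T y)) := by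
  set S := CFC.sqrt T
  have hS : IsSelfAdjoint S := IsSelfAdjoint.of_nonneg (CFC.sqrt_nonneg T)
  have hSS : ∀ x, S (S x) = T x := fun x =>
    congrArg (fun W : V →L[ℂ] V => W x) (CFC.sqrt_mul_sqrt_self T)
  rw [← ker_sqrt hT, ContinuousLinearMap.orthogonal_ker, hS.adjoint_eq] at hy
  refine closure_minimal (s := Set.range S)
    (t := {y | γ * ‖y‖ ^ 2 ≤ RCLike.re (inner ℂ y (T y))}) ?_ ?_ ?_
  · rintro _ ⟨w, rfl⟩
    calc γ * ‖S w‖ ^ 2 = RCLike.re (inner ℂ w ((γ • T) w)) := by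
          rw [← inner_self_eq_norm_sq (𝕜 := ℂ), hS.isSymmetric.apply_clm, hSS, smul_apply,
            inner_smul_right_eq_smul, RCLike.smul_re]
      _ ≤ RCLike.re (inner ℂ w (T (T w))) := re_inner_apply_le_of_le hgap w
      _ = RCLike.re (inner ℂ (S w) (T (S w))) := by
          rw [hS.isSymmetric.apply_clm, ← hSS (S w), hSS, hSS]
  · exact isClosed_le (by fun_prop) (by fun_prop)
  · rwa [← SetLike.mem_coe, Submodule.topologicalClosure_coe] at hy

lemma HasSpectralGap.mul_norm_sub_starProjection_ker_le (hT : 0 ≤ T)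
    (hgap : HasSpectralGap T γ) (x : V) :
    γ * (‖x‖ ^ 2 - ‖T.ker.starProjection x‖ ^ 2) ≤ RCLike.re (inner ℂ x (T x)) := by
  set p := T.ker.starProjection x
  have hp : T p = 0 := T.ker.starProjection_apply_mem x
  have hinner : inner ℂ (x - p) (T (x - p)) = inner ℂ x (T x) := by
    rw [map_sub, hp, sub_zero, inner_sub_left,
      ← (IsSelfAdjoint.of_nonneg hT).isSymmetric.apply_clm p, hp, inner_zero_left, sub_zero]
  rw [← norm_one_sub_apply_sq isStarProjection_starProjection, ← hinner]
  exact hgap.mul_norm_sq_le_of_mem_orthogonal_ker hT (T.ker.sub_starProjection_mem_orthogonal x)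

end Hilbert

section FiniteDimensional

variable {T : E →L[ℂ] E}

lemma exists_apply_eq_smul_of_mem_spectrum {c : ℝ} (hc : c ∈ spectrum ℝ T) :
    ∃ v : E, v ≠ 0 ∧ T v = (c : ℂ) • v := by
  have hc' : (c : ℂ) ∈ spectrum ℂ (T : E →ₗ[ℂ] E) := by
    rw [← AlgEquiv.spectrum_eq (Module.End.toContinuousLinearMap E)]
    exact (spectrum.algebraMap_mem_iff ℂ).mpr hc
  obtain ⟨v, hv⟩ := (Module.End.hasEigenvalue_iff_mem_spectrum.mpr hc').exists_hasEigenvector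
  exact ⟨v, hv.2, hv.apply_eq_smul⟩

lemma minNonzeroEig_pos_and_exists_eigenvector (hT : 0 ≤ T) (hT0 : T ≠ 0) :
    0 < minNonzeroEig T ∧ ∃ v : E, v ≠ 0 ∧ T v = (minNonzeroEig T : ℂ) • v := by
  refine Set.Nonempty.csInf_mem (s := {c : ℝ | 0 < c ∧ ∃ v : E, v ≠ 0 ∧ T v = (c : ℂ) • v}) ?_ ?_
  · by_contra hempty
    refine hT0 (CFC.eq_zero_of_spectrum_subset_zero (R := ℝ) T (fun c hc => ?_))
    by_contra hc0
    exact hempty ⟨c, (spectrum_nonneg_of_nonneg hT hc).lt_of_ne' hc0,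
      exists_apply_eq_smul_of_mem_spectrum hc⟩
  · refine ((Module.End.finite_hasEigenvalue (T : E →ₗ[ℂ] E)).preimage
      Complex.ofReal_injective.injOn).subset ?_
    rintro c ⟨-, v, hv, hTv⟩
    exact Module.End.hasEigenvalue_of_hasEigenvector ⟨Module.End.mem_eigenspace_iff.mpr hTv, hv⟩

lemma hasSpectralGap_minNonzeroEig (hT : 0 ≤ T) : HasSpectralGap T (minNonzeroEig T) := by
  have hpoly : T * T - minNonzeroEig T • T =
      cfc (fun x : ℝ => x * x - minNonzeroEig T * x) T := by
    rw [cfc_sub .., cfc_mul .., cfc_const_mul .., cfc_id' ..]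
  rw [HasSpectralGap, ← sub_nonneg, hpoly]
  refine cfc_nonneg fun c hc => ?_
  rcases (spectrum_nonneg_of_nonneg hT hc).eq_or_lt with rfl | hc0
  · simp
  · rw [← sub_mul]
    refine mul_nonneg (sub_nonneg.mpr (csInf_le ⟨0, fun _ hd => hd.1.le⟩ ?_)) hc0.le
    exact ⟨hc0, exists_apply_eq_smul_of_mem_spectrum hc⟩

end FiniteDimensional

end SpectralGap

section CStarAlgebra

open Polynomial

lemma sub_mul_sub_pow {R : Type*} [Ring R] {A K Q : R} (hAQ : A * Q = Q) (hQK : Q * K = Q)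
    (hKQ : K * Q = Q) (hQ : Q * Q = Q) (j : ℕ) : (A - Q) * (K - Q) ^ j = A * K ^ j - Q := by
  induction j with
  | zero => rw [pow_zero, pow_zero, mul_one, mul_one]
  | succ j ih =>
    have hKjQ : K ^ j * Q = Q := by
      clear ih
      induction j with
      | zero => rw [pow_zero, one_mul]
      | succ j ih => rw [pow_succ, mul_assoc, hKQ, ih]
    rw [pow_succ, ← mul_assoc, ih, sub_mul, mul_sub, mul_sub, hQK, hQ, sub_self, sub_zero,
      mul_assoc A, mul_assoc A, hKjQ, hAQ, pow_succ]

lemma star_sub_mul_sub {R : Type*} [Ring R] [StarRing R] {D Q : R} (hQ : IsStarProjection Q)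
    (hQD : Q * D = Q) : star (D - Q) * (D - Q) = star D * D - Q := by
  have hDQ : star D * Q = Q := by
    rw [← star_inj, star_mul, star_star, hQ.isSelfAdjoint.star_eq, hQD]
  rw [star_sub, hQ.isSelfAdjoint.star_eq, sub_mul, mul_sub, mul_sub, hDQ, hQD,
    hQ.isIdempotentElem.eq, sub_self, sub_zero]

variable {R : Type*} [CStarAlgebra R] [PartialOrder R] [StarOrderedRing R] {A B D Q : R} {ε : ℝ}

/-- Since `A * (D⋆D)ʲ * B` does not depend on `j ≤ m`, inserting any polynomial of degree `m` in
`D⋆D` with value `1` at `1` leaves `A * B` unchanged; the Chebyshev polynomial makes the inserted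
factor small on the complement of `Q`. -/
lemma norm_mul_sub_le_of_mul_pow_mul_eq (hA : IsStarProjection A) (hB : IsStarProjection B)
    (hQ : IsStarProjection Q) (hAQ : A * Q = Q) (hQB : Q * B = Q) (hQD : Q * D = Q)
    (hDQ : D * Q = Q) (hε : 0 ≤ ε) (hD : (1 + ε) * ‖D - Q‖ ^ 2 ≤ 1) {m : ℕ}
    (hpow : ∀ j ≤ m, A * (star D * D) ^ j * B = A * B) :
    ‖A * B - Q‖ ≤ 1 / (1 + 2 * (m : ℝ) ^ 2 * ε) := by
  have hsub : ∀ j ≤ m, (A - Q) * (star (D - Q) * (D - Q)) ^ j * B = (A - Q) * B := by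
    have hQD' : Q * star D = Q := by
      rw [← star_inj, star_mul, star_star, hQ.isSelfAdjoint.star_eq, hDQ]
    have hDQ' : star D * Q = Q := by
      rw [← star_inj, star_mul, star_star, hQ.isSelfAdjoint.star_eq, hQD]
    intro j hj
    rw [star_sub_mul_sub hQ hQD, sub_mul_sub_pow hAQ (by rw [← mul_assoc, hQD', hQD])
      (by rw [mul_assoc, hDQ, hDQ']) hQ.isIdempotentElem, sub_mul, hpow j hj, sub_mul]
  have hcheb := mul_aeval_mul hsub (natDegree_scaledChebyshev_le ε m)
  rw [eval_one_scaledChebyshev hε, one_smul, sub_mul A Q B, hQB] at hcheb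
  have hsmall := norm_aeval_scaledChebyshev_le hε m (star_mul_self_nonneg (D - Q))
    (by rwa [CStarRing.norm_star_mul_self, ← sq])
  rw [← hcheb]
  calc ‖(A - Q) * aeval (star (D - Q) * (D - Q)) (scaledChebyshev ε m) * B‖
      ≤ ‖A - Q‖ * ‖aeval (star (D - Q) * (D - Q)) (scaledChebyshev ε m)‖ * ‖B‖ :=
        norm_mul₃_le
    _ ≤ 1 * (1 / (1 + 2 * (m : ℝ) ^ 2 * ε)) * 1 := by
        gcongr
        · exact (hQ.sub_of_mul_eq_right hA hAQ).norm_le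
        · exact hB.norm_le
    _ = _ := by rw [one_mul, mul_one]

end CStarAlgebra

section Energy

variable {𝕜 V : Type*} [RCLike 𝕜] [NormedAddCommGroup V] [InnerProductSpace 𝕜 V] [CompleteSpace V]

lemma norm_inner_apply_apply_le {A B Q : V →L[𝕜] V} (hA : IsStarProjection A)
    (hB : IsStarProjection B) (hQB : Q * B = Q) {ψ : V} (hψ : Q ψ = 0) :
    ‖(inner 𝕜 (A ψ) (B ψ) : 𝕜)‖ ≤ ‖A * B - Q‖ * (‖A ψ‖ * ‖B ψ‖) := by
  have hAA : A (A ψ) = A ψ := congrArg (fun T : V →L[𝕜] V => T ψ) hA.isIdempotentElem.eq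
  have hBB : B (B ψ) = B ψ := congrArg (fun T : V →L[𝕜] V => T ψ) hB.isIdempotentElem.eq
  have hQBψ : Q (B ψ) = 0 := (congrArg (fun T : V →L[𝕜] V => T ψ) hQB).trans hψ
  have hinner : inner 𝕜 (A ψ) (B ψ) = inner 𝕜 (A ψ) ((A * B - Q) (B ψ)) := by
    rw [sub_apply, mul_apply_eq_comp, hBB, hQBψ, sub_zero, ← hA.isSelfAdjoint.isSymmetric.apply_clm,
      hAA]
  calc ‖(inner 𝕜 (A ψ) (B ψ) : 𝕜)‖ ≤ ‖A ψ‖ * ‖(A * B - Q) (B ψ)‖ := by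
        rw [hinner]
        exact norm_inner_le_norm _ _
    _ ≤ ‖A ψ‖ * (‖A * B - Q‖ * ‖B ψ‖) := by gcongr; exact ContinuousLinearMap.le_opNorm _ _
    _ = _ := by ring

lemma norm_apply_sq_add_norm_apply_sq_le {A B Q : V →L[𝕜] V} (hA : IsStarProjection A)
    (hB : IsStarProjection B) (hQB : Q * B = Q) {ψ : V} (hψ : Q ψ = 0) :
    ‖A ψ‖ ^ 2 + ‖B ψ‖ ^ 2 ≤ (1 + ‖A * B - Q‖) * ‖ψ‖ ^ 2 := by
  set s := ‖A ψ‖ ^ 2 + ‖B ψ‖ ^ 2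
  set κ := ‖A * B - Q‖
  have hCS : s ≤ ‖ψ‖ * ‖A ψ + B ψ‖ := by
    have hs : RCLike.re (inner 𝕜 ψ (A ψ + B ψ)) = s := by
      rw [inner_add_right, map_add, re_inner_apply_self_of_isStarProjection hA,
        re_inner_apply_self_of_isStarProjection hB]
    rw [← hs]
    exact (RCLike.re_le_norm _).trans (norm_inner_le_norm _ _)
  have hadd : ‖A ψ + B ψ‖ ^ 2 ≤ (1 + κ) * s := by
    have hre := (RCLike.re_le_norm _).trans (norm_inner_apply_apply_le hA hB hQB hψ)
    have hamgm := mul_le_mul_of_nonneg_left (two_mul_le_add_sq ‖A ψ‖ ‖B ψ‖)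
      (norm_nonneg (A * B - Q))
    rw [norm_add_sq (𝕜 := 𝕜)]
    linarith
  rcases (show 0 ≤ s by positivity).eq_or_lt with hs0 | hs0
  · rw [← hs0]
    positivity
  · refine le_of_mul_le_mul_left ?_ hs0
    calc s * s ≤ (‖ψ‖ * ‖A ψ + B ψ‖) * (‖ψ‖ * ‖A ψ + B ψ‖) := mul_self_le_mul_self hs0.le hCS
      _ = ‖ψ‖ ^ 2 * ‖A ψ + B ψ‖ ^ 2 := by ring
      _ ≤ ‖ψ‖ ^ 2 * ((1 + κ) * s) := by gcongr
      _ = s * ((1 + κ) * ‖ψ‖ ^ 2) := by ring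

end Energy

section GroundSpace

lemma mul_opNorm_sq_le_one {𝕜 V : Type*} [RCLike 𝕜] [NormedAddCommGroup V] [NormedSpace 𝕜 V]
    {c : ℝ} (hc : 0 < c) {T : V →L[𝕜] V}
    (h : ∀ x, c * ‖T x‖ ^ 2 ≤ ‖x‖ ^ 2) : c * ‖T‖ ^ 2 ≤ 1 := by
  have hT : ‖T‖ ≤ √c⁻¹ := T.opNorm_le_bound (Real.sqrt_nonneg _) fun x => by
    rw [← Real.sqrt_sq (norm_nonneg x), ← Real.sqrt_mul (inv_nonneg.mpr hc.le)]
    refine Real.le_sqrt_of_sq_le ?_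
    rw [inv_mul_eq_div, le_div_iff₀' hc]
    exact h x
  calc c * ‖T‖ ^ 2 ≤ c * √c⁻¹ ^ 2 := by gcongr
    _ = 1 := by rw [Real.sq_sqrt (inv_nonneg.mpr hc.le), mul_inv_cancel₀ hc.ne']

variable {ι V : Type*} [NormedAddCommGroup V] [InnerProductSpace ℂ V] [CompleteSpace V]

/-- The orthogonal projection onto the ground space of the partial Hamiltonian `∑ p ∈ X, P p`,
which for projectors `P p` is their common kernel. -/
noncomputable def groundProj (P : ι → V →L[ℂ] V) (X : Finset ι) : V →L[ℂ] V :=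
  (∑ p ∈ X, P p).ker.starProjection

variable {P : ι → V →L[ℂ] V} {X Y : Finset ι}

lemma isStarProjection_groundProj : IsStarProjection (groundProj P X) :=
  isStarProjection_starProjection

lemma re_inner_sum_apply (hP : ∀ p, IsStarProjection (P p)) (x : V) :
    RCLike.re (inner ℂ x ((∑ p ∈ X, P p) x)) = ∑ p ∈ X, ‖P p x‖ ^ 2 := by
  rw [sum_apply, inner_sum, map_sum]
  exact Finset.sum_congr rfl fun p _ => re_inner_apply_self_of_isStarProjection (hP p) x

lemma mem_ker_sum_iff (hP : ∀ p, IsStarProjection (P p)) {x : V} :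
    x ∈ (∑ p ∈ X, P p).ker ↔ ∀ p ∈ X, P p x = 0 := by
  refine ⟨fun hx => ?_, fun hx => ?_⟩
  · have hsum := re_inner_sum_apply (X := X) hP x
    rw [show (∑ p ∈ X, P p) x = 0 from hx, inner_zero_right, map_zero, eq_comm,
      Finset.sum_eq_zero_iff_of_nonneg fun p _ => sq_nonneg ‖P p x‖] at hsum
    exact fun p hp => norm_eq_zero.mp (pow_eq_zero_iff two_ne_zero |>.mp (hsum p hp))
  · change (∑ p ∈ X, P p) x = 0
    rw [sum_apply]
    exact Finset.sum_eq_zero hx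

lemma sum_nonneg_of_isStarProjection (hP : ∀ p, IsStarProjection (P p)) :
    0 ≤ ∑ p ∈ X, P p :=
  Finset.sum_nonneg fun p _ => (hP p).nonneg

lemma mul_groundProj (hP : ∀ p, IsStarProjection (P p)) {p : ι} (hp : p ∈ X) :
    P p * groundProj P X = 0 := by
  ext x
  exact (mem_ker_sum_iff hP).mp (Submodule.starProjection_apply_mem _ x) p hp

lemma groundProj_mul (hP : ∀ p, IsStarProjection (P p)) {p : ι} (hp : p ∈ X) :
    groundProj P X * P p = 0 := by
  rw [← star_inj, star_mul, (hP p).isSelfAdjoint.star_eq,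
    isStarProjection_groundProj.isSelfAdjoint.star_eq, mul_groundProj hP hp, star_zero]

lemma groundProj_apply_eq_zero_of_apply_eq_smul (hP : ∀ p, IsStarProjection (P p)) {c : ℂ}
    (hc : c ≠ 0) {ψ : V} (hψ : (∑ p ∈ X, P p) ψ = c • ψ) : groundProj P X ψ = 0 := by
  have hPsum : groundProj P X * ∑ p ∈ X, P p = 0 := by
    rw [Finset.mul_sum]
    exact Finset.sum_eq_zero fun p => groundProj_mul hP
  have hcψ : c • groundProj P X ψ = 0 := by
    rw [← map_smul, ← hψ, ← mul_apply_eq_comp, hPsum, zero_apply]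
  exact (smul_eq_zero.mp hcψ).resolve_left hc

lemma groundProj_mul_groundProj_of_subset (hP : ∀ p, IsStarProjection (P p)) (h : X ⊆ Y) :
    groundProj P X * groundProj P Y = groundProj P Y := by
  ext x
  refine Submodule.starProjection_eq_self_iff.mpr ((mem_ker_sum_iff hP).mpr fun p hp => ?_)
  exact (mem_ker_sum_iff hP).mp (Submodule.starProjection_apply_mem _ x) p (h hp)

lemma groundProj_mul_groundProj_of_superset (hP : ∀ p, IsStarProjection (P p)) (h : X ⊆ Y) :
    groundProj P Y * groundProj P X = groundProj P Y := by
  rw [← star_inj, star_mul, isStarProjection_groundProj.isSelfAdjoint.star_eq,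
    isStarProjection_groundProj.isSelfAdjoint.star_eq, groundProj_mul_groundProj_of_subset hP h]

variable [Fintype ι]

open Classical in
lemma one_add_mul_norm_complProd_sub_groundProj_sq_le (hP : ∀ p, IsStarProjection (P p)) {g : ℕ}
    (hg : ∀ p, (Finset.univ.filter fun q => ¬Commute (P p) (P q)).card ≤ g) {γ ε : ℝ}
    (hgap : HasSpectralGap (∑ p, P p) γ) (hγ : 0 < γ) (hε : 0 ≤ ε) (hgε : g ^ 2 * ε ≤ γ)
    {l : List ι} (hl : l.Nodup) (hmem : ∀ p, p ∈ l) :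
    (1 + ε) * ‖complProd P l - groundProj P Finset.univ‖ ^ 2 ≤ 1 := by
  set D := complProd P l
  set Q := groundProj P Finset.univ
  have hDQ : D * Q = Q := complProd_mul_eq_self (fun p => mul_groundProj hP (Finset.mem_univ p)) l
  have hQD : Q * D = Q := mul_complProd_eq_self (fun p => groundProj_mul hP (Finset.mem_univ p)) l
  have hQ : IsStarProjection Q := isStarProjection_groundProj
  refine mul_opNorm_sq_le_one (by positivity) fun x => ?_
  set y := (1 - Q) x
  have hDy : (D - Q) x = D y := by
    rw [← mul_apply_eq_comp, mul_sub, mul_one, hDQ]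
  have hQDy : Q (D y) = 0 := by
    rw [← mul_apply_eq_comp, ← mul_apply_eq_comp, hQD, hQ.mul_one_sub_self, zero_apply]
  have hexc : γ * ‖D y‖ ^ 2 ≤ ∑ p, ‖P p (D y)‖ ^ 2 := by
    have := hgap.mul_norm_sub_starProjection_ker_le (sum_nonneg_of_isStarProjection hP) (D y)
    rwa [re_inner_sum_apply hP, show (∑ p, P p).ker.starProjection (D y) = 0 from hQDy, norm_zero,
      zero_pow two_ne_zero, sub_zero] at this
  have hdet : γ * ‖D y‖ ^ 2 ≤ g ^ 2 * (‖y‖ ^ 2 - ‖D y‖ ^ 2) :=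
    hexc.trans (sum_norm_apply_complProd_sq_le hP hg hl hmem y)
  have hyx : ‖y‖ ^ 2 ≤ ‖x‖ ^ 2 := by
    gcongr
    exact norm_apply_le_of_isStarProjection hQ.one_sub x
  have hdiff : 0 ≤ ‖y‖ ^ 2 - ‖D y‖ ^ 2 := by
    rw [← sum_sq_stepLoss hP hl]
    exact Finset.sum_nonneg fun _ _ => sq_nonneg _
  have hεD : ε * ‖D y‖ ^ 2 ≤ ‖y‖ ^ 2 - ‖D y‖ ^ 2 := by
    refine le_of_mul_le_mul_left ?_ hγ
    calc γ * (ε * ‖D y‖ ^ 2) = ε * (γ * ‖D y‖ ^ 2) := by ring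
      _ ≤ ε * (g ^ 2 * (‖y‖ ^ 2 - ‖D y‖ ^ 2)) := by gcongr
      _ = g ^ 2 * ε * (‖y‖ ^ 2 - ‖D y‖ ^ 2) := by ring
      _ ≤ γ * (‖y‖ ^ 2 - ‖D y‖ ^ 2) := by gcongr
  rw [hDy]
  linarith

end GroundSpace

section GapAmplification

variable {ι V : Type*} [Fintype ι]

/-- The list of layers, each enumerated as a list of indices. -/
noncomputable def layerWord {L : ℕ} (layer : ι → Fin L) : List (List ι) :=
  (List.finRange L).map fun α => (Finset.univ.filter (layer · = α)).toList

lemma length_layerWord {L : ℕ} (layer : ι → Fin L) : (layerWord layer).length = L := by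
  simp [layerWord]

lemma mem_flatten_layerWord {L : ℕ} (layer : ι → Fin L) (p : ι) :
    p ∈ (layerWord layer).flatten := by
  simp [layerWord]

lemma nodup_flatten_layerWord {L : ℕ} (layer : ι → Fin L) :
    (layerWord layer).flatten.Nodup := by
  rw [List.nodup_flatten]
  constructor
  · simp only [layerWord, List.mem_map, forall_exists_index, and_imp]
    rintro l α - rfl
    exact Finset.nodup_toList _
  · rw [layerWord, List.pairwise_map]
    refine (List.nodup_finRange L).imp fun hαβ p hα hβ => hαβ ?_
    rw [Finset.mem_toList, Finset.mem_filter] at hα hβ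
    exact hα.2.symm.trans hβ.2

lemma commute_of_mem_layerWord {R : Type*} [Mul R] {P : ι → R} {L : ℕ} {layer : ι → Fin L}
    (hlayer : ∀ p q, layer p = layer q → Commute (P p) (P q)) :
    ∀ l ∈ layerWord layer, ∀ p ∈ l, ∀ q ∈ l, Commute (P p) (P q) := by
  simp only [layerWord, List.mem_map, forall_exists_index, and_imp]
  rintro l α - rfl p hp q hq
  rw [Finset.mem_toList, Finset.mem_filter] at hp hq
  exact hlayer p q (hp.2.trans hq.2.symm)

variable [NormedAddCommGroup V] [InnerProductSpace ℂ V] [CompleteSpace V] {P : ι → V →L[ℂ] V}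
  {X Y : Finset ι} {γ γ' ε : ℝ} {g L m N : ℕ} {layer : ι → Fin L}

open Classical in
lemma norm_groundProj_mul_groundProj_sub_le (hP : ∀ p, IsStarProjection (P p))
    (hg : ∀ p, (Finset.univ.filter fun q => ¬Commute (P p) (P q)).card ≤ g)
    (hlayer : ∀ p q, layer p = layer q → Commute (P p) (P q))
    (hgap : HasSpectralGap (∑ p, P p) γ) (hγ : 0 < γ) (hε : 0 ≤ ε) (hgε : g ^ 2 * ε ≤ γ)
    (hmN : m * (L + L) ≤ N) (hcone : ∀ k < N, lightCone P {p | P p ≠ 0 ∧ p ∉ X} k ⊆ Y) :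
    ‖groundProj P X * groundProj P Y - groundProj P Finset.univ‖ ≤
      1 / (1 + 2 * (m : ℝ) ^ 2 * ε) := by
  set w := layerWord layer
  refine norm_mul_sub_le_of_mul_pow_mul_eq (D := complProd P w.flatten)
    isStarProjection_groundProj isStarProjection_groundProj isStarProjection_groundProj
    (groundProj_mul_groundProj_of_subset hP (Finset.subset_univ X))
    (groundProj_mul_groundProj_of_superset hP (Finset.subset_univ Y))
    (mul_complProd_eq_self (fun p => groundProj_mul hP (Finset.mem_univ p)) _)
    (complProd_mul_eq_self (fun p => mul_groundProj hP (Finset.mem_univ p)) _) hε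
    (one_add_mul_norm_complProd_sub_groundProj_sq_le hP hg hgap hγ hε hgε
      (nodup_flatten_layerWord layer) (mem_flatten_layerWord layer)) fun j hj => ?_
  refine mul_pow_star_complProd_mul (U := {p | P p ≠ 0 ∧ p ∉ X}) (N := N)
    (fun p => (hP p).isSelfAdjoint) (fun p hp => ?_)
    (fun k hk p hp => mul_groundProj hP (hcone k hk hp)) (commute_of_mem_layerWord hlayer) ?_
  · by_cases hp0 : P p = 0
    · rw [hp0, mul_zero]
    · exact groundProj_mul hP (by_contra fun hpX => hp ⟨hp0, hpX⟩)
  · rw [length_layerWord]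
    exact (Nat.mul_le_mul_right _ hj).trans hmN

lemma HasSpectralGap.mul_norm_sq_sub_groundProj_le (hP : ∀ p, IsStarProjection (P p))
    (hgap : HasSpectralGap (∑ p ∈ X, P p) γ') {ψ : V} (hψ : (∑ p, P p) ψ = (γ : ℂ) • ψ) :
    γ' * (‖ψ‖ ^ 2 - ‖groundProj P X ψ‖ ^ 2) ≤ γ * ‖ψ‖ ^ 2 := by
  calc γ' * (‖ψ‖ ^ 2 - ‖groundProj P X ψ‖ ^ 2)
      ≤ RCLike.re (inner ℂ ψ ((∑ p ∈ X, P p) ψ)) :=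
        hgap.mul_norm_sub_starProjection_ker_le (sum_nonneg_of_isStarProjection hP) ψ
    _ ≤ RCLike.re (inner ℂ ψ ((∑ p, P p) ψ)) := by
        rw [re_inner_sum_apply hP, re_inner_sum_apply hP]
        exact Finset.sum_le_sum_of_subset_of_nonneg (Finset.subset_univ X)
          fun p _ _ => sq_nonneg _
    _ = γ * ‖ψ‖ ^ 2 := by
        rw [hψ, inner_smul_right]
        exact (Complex.re_ofReal_mul _ _).trans
          (congrArg (γ * ·) (inner_self_eq_norm_sq (𝕜 := ℂ) ψ))

lemma mul_one_sub_norm_groundProj_mul_sub_le (hP : ∀ p, IsStarProjection (P p))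
    (hX : HasSpectralGap (∑ p ∈ X, P p) γ') (hY : HasSpectralGap (∑ p ∈ Y, P p) γ')
    (hγ' : 0 ≤ γ') (hγ : γ ≠ 0) {ψ : V} (hψ0 : ψ ≠ 0) (hψ : (∑ p, P p) ψ = (γ : ℂ) • ψ) :
    γ' * (1 - ‖groundProj P X * groundProj P Y - groundProj P Finset.univ‖) ≤ 2 * γ := by
  set κ := ‖groundProj P X * groundProj P Y - groundProj P Finset.univ‖
  have hoverlap : ‖groundProj P X ψ‖ ^ 2 + ‖groundProj P Y ψ‖ ^ 2 ≤ (1 + κ) * ‖ψ‖ ^ 2 :=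
    norm_apply_sq_add_norm_apply_sq_le isStarProjection_groundProj isStarProjection_groundProj
      (groundProj_mul_groundProj_of_superset hP (Finset.subset_univ Y))
      (groundProj_apply_eq_zero_of_apply_eq_smul hP (Complex.ofReal_ne_zero.mpr hγ) hψ)
  have hEX := hX.mul_norm_sq_sub_groundProj_le hP hψ
  have hEY := hY.mul_norm_sq_sub_groundProj_le hP hψ
  have hψpos : 0 < ‖ψ‖ ^ 2 := by positivity
  refine le_of_mul_le_mul_right ?_ hψpos
  linarith [mul_le_mul_of_nonneg_left hoverlap hγ']

open Classical in
lemma le_two_mul_add_of_lightCone_subset (hP : ∀ p, IsStarProjection (P p))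
    (hg : ∀ p, (Finset.univ.filter fun q => ¬Commute (P p) (P q)).card ≤ g)
    (hlayer : ∀ p q, layer p = layer q → Commute (P p) (P q))
    (hgap : HasSpectralGap (∑ p, P p) γ) (hγ : 0 < γ)
    (hX : HasSpectralGap (∑ p ∈ X, P p) γ') (hY : HasSpectralGap (∑ p ∈ Y, P p) γ')
    (hγ' : 0 ≤ γ') (hm : 0 < m) (hmN : m * (L + L) ≤ N)
    (hcone : ∀ k < N, lightCone P {p | P p ≠ 0 ∧ p ∉ X} k ⊆ Y)
    {ψ : V} (hψ0 : ψ ≠ 0) (hψ : (∑ p, P p) ψ = (γ : ℂ) • ψ) :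
    γ' ≤ 2 * γ + (g : ℝ) ^ 2 / (m : ℝ) ^ 2 := by
  -- `δ > 0` only serves to cover `g = 0`, where `γ / g ^ 2` would be a junk value.
  refine le_of_forall_pos_le_add fun δ hδ => ?_
  have hden : 0 < (g : ℝ) ^ 2 + δ * (m : ℝ) ^ 2 := by positivity
  set ε := γ / ((g : ℝ) ^ 2 + δ * (m : ℝ) ^ 2) with hεdef
  have hε : 0 < ε := div_pos hγ hden
  have hgε : g ^ 2 * ε ≤ γ := by
    rw [hεdef, mul_div_assoc', div_le_iff₀ hden, mul_comm]
    gcongr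
    exact le_add_of_nonneg_right (by positivity)
  set s := 2 * (m : ℝ) ^ 2 * ε with hs
  have hspos : 0 < s := by positivity
  have hκ := norm_groundProj_mul_groundProj_sub_le hP hg hlayer hgap hγ hε.le hgε hmN hcone
  have hγ's : γ' * (1 - 1 / (1 + s)) ≤ 2 * γ :=
    (mul_le_mul_of_nonneg_left (sub_le_sub_left hκ 1) hγ').trans
      (mul_one_sub_norm_groundProj_mul_sub_le hP hX hY hγ' hγ.ne' hψ0 hψ)
  have hγ'_le : γ' ≤ 2 * γ * ((1 + s) / s) := by
    rw [← mul_div_assoc, le_div_iff₀ hspos]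
    rw [one_sub_div (by positivity), add_sub_cancel_left, mul_div_assoc',
      div_le_iff₀ (by positivity)] at hγ's
    exact hγ's
  refine hγ'_le.trans_eq ?_
  rw [hs, hεdef]
  field_simp
  ring

end GapAmplification

section Segments

variable {n : ℕ} [NeZero n]

lemma bondIn_seg {a x t : ℕ} (hx : x + 1 < t) :
    bondIn ((a + x : ℕ) : Fin n) (seg (a : Fin n) t) := by
  refine ⟨Finset.mem_image.mpr ⟨x, Finset.mem_range.mpr (by lia), (Nat.cast_add a x).symm⟩,
    Finset.mem_image.mpr ⟨x + 1, Finset.mem_range.mpr hx, ?_⟩⟩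
  push_cast
  rw [add_assoc]

lemma disjoint_seg {a b t : ℕ} (hab : a + t ≤ b) (hba : b + t ≤ a + n) :
    Disjoint (seg (a : Fin n) t) (seg (b : Fin n) t) := by
  rw [Finset.disjoint_left]
  intro z hza hzb
  obtain ⟨x, hx, hxz⟩ := Finset.mem_image.mp hza
  obtain ⟨y, hy, hyz⟩ := Finset.mem_image.mp hzb
  rw [Finset.mem_range] at hx hy
  have hmod : (b + y) % n = (a + x) % n := by
    have := congrArg Fin.val (hyz.trans hxz.symm)
    rwa [Fin.val_add, Fin.val_add, Fin.val_natCast, Fin.val_natCast, Fin.val_natCast,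
      Fin.val_natCast, ← Nat.add_mod, ← Nat.add_mod] at this
  have hzero := Nat.sub_mod_eq_zero_of_mod_eq hmod
  rw [Nat.mod_eq_of_lt (by lia)] at hzero
  lia

lemma pairwiseDisjoint_seg {a : ℕ → ℕ} {t K : ℕ} (hstep : ∀ k, a k + t ≤ a (k + 1))
    (hwrap : ∀ k < K, a k + t ≤ a 0 + n) :
    (Finset.range K : Set ℕ).PairwiseDisjoint fun k => seg (a k : Fin n) t := by
  have hmono : Monotone a := monotone_nat_of_le_succ fun k => (Nat.le_add_right _ _).trans (hstep k)
  have hlt : ∀ k l, k < l → l < K → Disjoint (seg (a k : Fin n) t) (seg (a l : Fin n) t) :=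
    fun k l hkl hl => disjoint_seg ((hstep k).trans (hmono hkl))
      ((hwrap l hl).trans (Nat.add_le_add_right (hmono k.zero_le) n))
  intro k hk l hl hkl
  rw [Finset.mem_coe, Finset.mem_range] at hk hl
  exact hkl.lt_or_gt.elim (fun h => hlt k l h hl) fun h => (hlt l k h hk).symm

/-- The sites `i` and `j` of the cycle are at distance at most `k`, that is `j - i ∈ [-k, k]`
modulo `n`; both sides are shifted by `k` so that no subtraction occurs. -/
def WithinCyclicDist (k : ℕ) (i j : Fin n) : Prop := ∃ e ≤ 2 * k, j + (k : Fin n) = i + (e : Fin n)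

namespace WithinCyclicDist

variable {k : ℕ} {i j : Fin n}

lemma refl (k : ℕ) (i : Fin n) : WithinCyclicDist k i i := ⟨k, by lia, rfl⟩

lemma of_add_one (h : WithinCyclicDist k i (j + 1)) : WithinCyclicDist (k + 1) i j := by
  obtain ⟨e, he, h⟩ := h
  refine ⟨e, by lia, ?_⟩
  rw [← h]
  push_cast
  abel

lemma succ (h : WithinCyclicDist k i j) : WithinCyclicDist (k + 1) i j := by
  obtain ⟨e, he, h⟩ := h
  refine ⟨e + 1, by lia, ?_⟩
  push_cast
  rw [← add_assoc, ← add_assoc, h]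

lemma add_one (h : WithinCyclicDist k i j) : WithinCyclicDist (k + 1) i (j + 1) := by
  obtain ⟨e, he, h⟩ := h
  refine ⟨e + 1 + 1, by lia, ?_⟩
  push_cast
  rw [← add_assoc i, ← add_assoc i, ← h]
  abel

lemma exists_natCast_eq {i : ℕ} (h : WithinCyclicDist k (i : Fin n) j) (hk : k ≤ i) :
    ∃ y : ℕ, j = (y : Fin n) ∧ i ≤ y + k ∧ y ≤ i + k := by
  obtain ⟨e, he, h⟩ := h
  refine ⟨i + e - k, add_right_cancel (b := (k : Fin n)) ?_, by lia, by lia⟩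
  rw [h, ← Nat.cast_add, ← Nat.cast_add, Nat.sub_add_cancel (by lia)]

end WithinCyclicDist

/-- Evenly spaced points dividing `[0, D]` into `⌊D / t⌋` intervals of length at least `t`. -/
def spacedPoint (t D k : ℕ) : ℕ := k * D / (D / t)

variable {t D : ℕ}

lemma spacedPoint_zero : spacedPoint t D 0 = 0 := by
  rw [spacedPoint, zero_mul, Nat.zero_div]

lemma spacedPoint_div (hDt : 0 < D / t) : spacedPoint t D (D / t) = D :=
  Nat.mul_div_cancel_left D hDt

lemma spacedPoint_add_le_succ (hDt : 0 < D / t) (k : ℕ) :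
    spacedPoint t D k + t ≤ spacedPoint t D (k + 1) := by
  rw [spacedPoint, spacedPoint, ← Nat.add_mul_div_right _ _ hDt, Nat.succ_mul]
  exact Nat.div_le_div_right (Nat.add_le_add_left (Nat.mul_div_le D t) _)

lemma spacedPoint_succ_le (ht : 0 < t) (hD : 4 * t ≤ D) (k : ℕ) :
    spacedPoint t D (k + 1) ≤ spacedPoint t D k + (t + (t + 2) / 4) := by
  have hDt : 4 ≤ D / t := (Nat.le_div_iff_mul_le ht).mpr hD
  have hexcess : D ≤ (t + (t + 2) / 4) * (D / t) := by
    have hround : 4 * ((t + 2) / 4) ≤ (D / t) * ((t + 2) / 4) := Nat.mul_le_mul_right _ hDt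
    have hmod := Nat.mod_lt D ht
    calc D = t * (D / t) + D % t := (Nat.div_add_mod D t).symm
      _ ≤ t * (D / t) + (D / t) * ((t + 2) / 4) := by lia
      _ = (t + (t + 2) / 4) * (D / t) := by ring
  rw [spacedPoint, spacedPoint, ← Nat.add_mul_div_right _ _ (by lia), Nat.succ_mul]
  exact Nat.div_le_div_right (Nat.add_le_add_left hexcess _)

lemma monotone_spacedPoint (hDt : 0 < D / t) : Monotone (spacedPoint t D) :=
  monotone_nat_of_le_succ fun k => (Nat.le_add_right _ _).trans (spacedPoint_add_le_succ hDt k)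

lemma spacedPoint_add_le {k : ℕ} (hk : k < D / t) : spacedPoint t D k + t ≤ D :=
  have hDt : 0 < D / t := k.zero_le.trans_lt hk
  (spacedPoint_add_le_succ hDt k).trans
    ((monotone_spacedPoint hDt hk).trans_eq (spacedPoint_div hDt))

lemma exists_spacedPoint_le_lt (hDt : 0 < D / t) {i : ℕ} (hi : i < D) :
    ∃ k < D / t, spacedPoint t D k ≤ i ∧ i < spacedPoint t D (k + 1) := by
  obtain ⟨k, hk, hk'⟩ := Nat.exists_not_and_succ_of_not_zero_of_exists
    (p := fun k => i < spacedPoint t D k) (by rw [spacedPoint_zero]; exact Nat.not_lt_zero i)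
    ⟨D / t, by rwa [spacedPoint_div hDt]⟩
  refine ⟨k, lt_of_not_ge fun hle => hk ?_, not_lt.mp hk, hk'⟩
  exact ((spacedPoint_div hDt).symm ▸ hi).trans_le (monotone_spacedPoint hDt hle)

-- A bond missed by all the segments at the spaced points sits between two of them, close to the
-- middle of the segment shifted by `t / 2`, which therefore contains all bonds near it.
lemma exists_bondIn_seg_or_forall_near (ht : 0 < t) (hD : 4 * t ≤ D) {i : ℕ} (hi : i < D) :
    ∃ k < D / t, bondIn (i : Fin n) (seg (spacedPoint t D k : Fin n) t) ∨
      ∀ d < t / 4, ∀ j : Fin n, WithinCyclicDist d (i : Fin n) j →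
        bondIn j (seg ((spacedPoint t D k + t / 2 : ℕ) : Fin n) t) := by
  obtain ⟨k, hk, hki, hik⟩ := exists_spacedPoint_le_lt (Nat.div_pos (by lia) ht) hi
  have hgap := spacedPoint_succ_le ht hD k
  refine ⟨k, hk, (lt_or_ge (i + 1) (spacedPoint t D k + t)).imp (fun hin => ?_) fun hout => ?_⟩
  · rw [← Nat.add_sub_of_le hki]
    exact bondIn_seg (by lia)
  · intro d hd j hij
    obtain ⟨y, rfl, hiy, hyi⟩ := hij.exists_natCast_eq (by lia)
    rw [← Nat.add_sub_of_le (show spacedPoint t D k + t / 2 ≤ y by lia)]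
    exact bondIn_seg (by lia)

lemma exists_alternating_segments (ht : 0 < t) (htn : 5 * t ≤ n) (openBC : Bool) :
    ∃ (K M : ℕ) (a b : ℕ → ℕ),
      (∀ k < K, a k + t ≤ n) ∧ (∀ k < M, openBC = true → b k + t ≤ n) ∧
      (Finset.range K : Set ℕ).PairwiseDisjoint (fun k => seg (a k : Fin n) t) ∧
      (Finset.range M : Set ℕ).PairwiseDisjoint (fun k => seg (b k : Fin n) t) ∧
      ∀ i : Fin n, (openBC = true → (i : ℕ) + 1 ≠ n) →
        (∃ k < K, bondIn i (seg (a k : Fin n) t)) ∨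
        ∃ k < M, ∀ d < t / 4, ∀ j, WithinCyclicDist d i j → bondIn j (seg (b k : Fin n) t) := by
  obtain ⟨D, K, hDn, hD, hK, hKn, hcases⟩ : ∃ D K, D ≤ n ∧ 4 * t ≤ D ∧ D / t ≤ K ∧
      (∀ k < K, spacedPoint t D k + t ≤ n) ∧
      (openBC = false ∧ D = n ∨ openBC = true ∧ D + t = n ∧ D / t < K) := by
    cases openBC
    · exact ⟨n, n / t, le_rfl, by lia, le_rfl, fun k => spacedPoint_add_le, Or.inl ⟨rfl, rfl⟩⟩
    · have hDt : 0 < (n - t) / t := Nat.div_pos (by lia) ht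
      refine ⟨n - t, (n - t) / t + 1, by lia, by lia, by lia, fun k hk => ?_, Or.inr (by lia)⟩
      have := (monotone_spacedPoint hDt (Nat.lt_succ_iff.mp hk)).trans_eq (spacedPoint_div hDt)
      lia
  have hDt : 0 < D / t := Nat.div_pos (by lia) ht
  have hstep := spacedPoint_add_le_succ hDt
  refine ⟨K, D / t, spacedPoint t D, fun k => spacedPoint t D k + t / 2, hKn, fun k hk ho => ?_,
    pairwiseDisjoint_seg hstep fun k hk => Nat.le_add_left_of_le (hKn k hk),
    pairwiseDisjoint_seg (fun k => by have := hstep k; lia) fun k hk => ?_, fun i hin => ?_⟩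
  · have := spacedPoint_add_le hk
    rcases hcases with ⟨hclosed, -⟩ | ⟨-, hDtn, -⟩
    · exact absurd (ho.symm.trans hclosed) (by decide)
    · lia
  · have := spacedPoint_add_le hk
    lia
  · rw [← Fin.cast_val_eq_self i]
    rcases lt_or_ge (i : ℕ) D with hiD | hDi
    · obtain ⟨k, hk, hS | hT⟩ := exists_bondIn_seg_or_forall_near (n := n) ht hD hiD
      · exact Or.inl ⟨k, hk.trans_le hK, hS⟩
      · exact Or.inr ⟨k, hk, hT⟩
    · rcases hcases with ⟨-, rfl⟩ | ⟨ho, hDtn, hDK⟩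
      · exact absurd i.isLt hDi.not_gt
      · refine Or.inl ⟨D / t, hDK, ?_⟩
        rw [spacedPoint_div hDt, ← Nat.add_sub_of_le hDi]
        exact bondIn_seg (by have := hin ho; lia)

end Segments

namespace ChainSetup

variable {n : ℕ} [NeZero n] (C : ChainSetup n E)

/-- The index set of the pairs `(i, j)` labelling the projectors `P_{ij}`. -/
abbrev Index : Type := (i : Fin n) × Fin (C.m i)

/-- The projectors `P_{ij}` as a single family, so that the results on abstract families of
projectors apply. -/
def family (p : C.Index) : E →L[ℂ] E := C.P p.1 p.2

lemma isStarProjection_P (i : Fin n) (j : Fin (C.m i)) : IsStarProjection (C.P i j) :=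
  ⟨(C.proj i j).2, (C.proj i j).1⟩

lemma isStarProjection_family (p : C.Index) : IsStarProjection (C.family p) :=
  C.isStarProjection_P p.1 p.2

open Classical in
lemma card_not_commute_family_le (p : C.Index) :
    (Finset.univ.filter fun q => ¬Commute (C.family p) (C.family q)).card ≤ C.g := by
  have hg := C.gbound p
  rw [Nat.card_eq_fintype_card, Fintype.card_subtype] at hg
  refine (Finset.card_le_card (Finset.monotone_filter_right _ fun q _ hq => ⟨?_, hq⟩)).trans hg
  rintro rfl
  exact hq (Commute.refl _)

lemma Hfull_eq_sum_family : C.Hfull = ∑ p, C.family p :=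
  Finset.sum_sigma' _ _ _

lemma hamOn_eq_sum_family (F : Finset (Fin n)) :
    C.hamOn F = ∑ p : C.Index with bondIn p.1 F, C.family p := by
  rw [hamOn]
  simp only [Hbond]
  rw [Finset.sum_sigma']
  refine Finset.sum_congr ?_ fun _ _ => rfl
  ext p
  simp only [Finset.mem_sigma, Finset.mem_filter, Finset.mem_univ, true_and, and_true]

lemma family_eq_zero_of_Hbond_eq_zero {p : C.Index} (h : C.Hbond p.1 = 0) : C.family p = 0 := by
  ext x
  refine (mem_ker_sum_iff (C.isStarProjection_P p.1)).mp ?_ p.2 (Finset.mem_univ _)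
  exact (congrArg (· x) h : _)

lemma commute_family_of_disjoint {F F' : Finset (Fin n)} (h : Disjoint F F') {p q : C.Index}
    (hp : bondIn p.1 F) (hq : bondIn q.1 F') : Commute (C.family p) (C.family q) :=
  C.locality _ _ _ _ <| h.mono
    (Finset.insert_subset hp.1 (Finset.singleton_subset_iff.mpr hp.2))
    (Finset.insert_subset hq.1 (Finset.singleton_subset_iff.mpr hq.2))

lemma hamOn_nonneg (F : Finset (Fin n)) : 0 ≤ C.hamOn F := by
  rw [hamOn_eq_sum_family]
  exact sum_nonneg_of_isStarProjection C.isStarProjection_family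

lemma hamOn_le_Hfull (F : Finset (Fin n)) : C.hamOn F ≤ C.Hfull := by
  rw [hamOn_eq_sum_family, Hfull_eq_sum_family]
  exact Finset.sum_le_sum_of_subset_of_nonneg (Finset.subset_univ _)
    fun p _ _ => (C.isStarProjection_family p).nonneg

lemma commute_hamOn_of_disjoint {F F' : Finset (Fin n)} (h : Disjoint F F') :
    Commute (C.hamOn F) (C.hamOn F') := by
  rw [hamOn_eq_sum_family, hamOn_eq_sum_family]
  exact Commute.sum_left _ _ _ fun p hp => Commute.sum_right _ _ _ fun q hq =>
    C.commute_family_of_disjoint h (Finset.mem_filter.mp hp).2 (Finset.mem_filter.mp hq).2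

lemma localGap_nonneg (openBC : Bool) (t : ℕ) : 0 ≤ C.localGap openBC t := by
  refine Real.sInf_nonneg ?_
  rintro x ⟨a, -, rfl⟩
  exact minNonzeroEig_nonneg _

lemma localGap_le {openBC : Bool} {t : ℕ} {a : Fin n} (ha : openBC = true → (a : ℕ) + t ≤ n) :
    C.localGap openBC t ≤ minNonzeroEig (C.hamOn (seg a t)) := by
  refine csInf_le ⟨0, ?_⟩ ⟨a, ha, rfl⟩
  rintro x ⟨b, -, rfl⟩
  exact minNonzeroEig_nonneg _

lemma hasSpectralGap_hamOn_seg {openBC : Bool} {t : ℕ} {a : Fin n}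
    (ha : openBC = true → (a : ℕ) + t ≤ n) :
    HasSpectralGap (C.hamOn (seg a t)) (C.localGap openBC t) :=
  (hasSpectralGap_minNonzeroEig (C.hamOn_nonneg _)).mono (C.hamOn_nonneg _) (C.localGap_le ha)

/-- The labels of the projectors supported inside one of the regions `F k`, `k ∈ s`. -/
def indicesInside {κ : Type*} (s : Finset κ) (F : κ → Finset (Fin n)) : Finset C.Index :=
  s.biUnion fun k => {p | bondIn p.1 (F k)}

lemma mem_indicesInside {κ : Type*} {s : Finset κ} {F : κ → Finset (Fin n)} {p : C.Index} :
    p ∈ C.indicesInside s F ↔ ∃ k ∈ s, bondIn p.1 (F k) := by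
  simp only [indicesInside, Finset.mem_biUnion, Finset.mem_filter, Finset.mem_univ, true_and]

lemma sum_indicesInside {κ : Type*} {s : Finset κ} {F : κ → Finset (Fin n)}
    (hF : (s : Set κ).PairwiseDisjoint F) :
    ∑ p ∈ C.indicesInside s F, C.family p = ∑ k ∈ s, C.hamOn (F k) := by
  simp only [hamOn_eq_sum_family]
  refine Finset.sum_biUnion fun k hk l hl hkl => Finset.disjoint_left.mpr fun p hp hp' => ?_
  exact Finset.disjoint_left.mp (hF hk hl hkl) (Finset.mem_filter.mp hp).2.1
    (Finset.mem_filter.mp hp').2.1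

lemma hasSpectralGap_sum_indicesInside {κ : Type*} {s : Finset κ} {F : κ → Finset (Fin n)}
    (hF : (s : Set κ).PairwiseDisjoint F) {γ : ℝ}
    (hgap : ∀ k ∈ s, HasSpectralGap (C.hamOn (F k)) γ) :
    HasSpectralGap (∑ p ∈ C.indicesInside s F, C.family p) γ := by
  rw [sum_indicesInside C hF]
  refine HasSpectralGap.sum (fun k _ => C.hamOn_nonneg _) hgap fun k hk l hl => ?_
  rcases eq_or_ne k l with rfl | hkl
  · exact Commute.refl _
  · exact C.commute_hamOn_of_disjoint (hF hk hl hkl)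

lemma eq_or_eq_add_one_of_not_commute {p q : C.Index} (h : ¬Commute (C.family p) (C.family q)) :
    p.1 = q.1 ∨ p.1 = q.1 + 1 ∨ q.1 = p.1 + 1 := by
  have hmeet := mt (C.locality p.1 q.1 p.2 q.2) h
  obtain ⟨x, hxp, hxq⟩ := Finset.not_disjoint_iff.mp hmeet
  rw [Finset.mem_insert, Finset.mem_singleton] at hxp hxq
  rcases hxp with rfl | rfl <;> rcases hxq with h' | h'
  · exact Or.inl h'
  · exact Or.inr (Or.inl h')
  · exact Or.inr (Or.inr h'.symm)
  · exact Or.inl (add_right_cancel h')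

lemma exists_withinCyclicDist_of_mem_lightCone {U : Set C.Index} {k : ℕ} {p : C.Index}
    (hp : p ∈ lightCone C.family U k) : ∃ u ∈ U, WithinCyclicDist k u.1 p.1 := by
  induction k generalizing p with
  | zero => exact ⟨p, hp, WithinCyclicDist.refl 0 p.1⟩
  | succ k ih =>
    rcases hp with hp | ⟨q, hq, hpq⟩
    · obtain ⟨u, hu, h⟩ := ih hp
      exact ⟨u, hu, h.succ⟩
    · obtain ⟨u, hu, h⟩ := ih hq
      refine ⟨u, hu, ?_⟩
      rcases C.eq_or_eq_add_one_of_not_commute hpq with h' | h' | h'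
      · exact h' ▸ h.succ
      · exact h' ▸ h.add_one
      · exact (h' ▸ h).of_add_one

lemma lightCone_subset_indicesInside {κ κ' : Type*} {s : Finset κ} {s' : Finset κ'}
    {F : κ → Finset (Fin n)} {F' : κ' → Finset (Fin n)} {N : ℕ}
    (hcover : ∀ i, C.Hbond i ≠ 0 → (∃ k ∈ s, bondIn i (F k)) ∨
      ∃ k ∈ s', ∀ d < N, ∀ j, WithinCyclicDist d i j → bondIn j (F' k)) {d : ℕ} (hd : d < N) :
    lightCone C.family {p | C.family p ≠ 0 ∧ p ∉ C.indicesInside s F} d ⊆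
      C.indicesInside s' F' := by
  intro p hp
  obtain ⟨u, ⟨hu0, hu⟩, hup⟩ := C.exists_withinCyclicDist_of_mem_lightCone hp
  rcases hcover u.1 (mt C.family_eq_zero_of_Hbond_eq_zero hu0) with hin | ⟨k, hk, hnear⟩
  · exact absurd (C.mem_indicesInside.mpr hin) hu
  · exact C.mem_indicesInside.mpr ⟨k, hk, hnear d hd p.1 hup⟩

lemma minNonzeroEig_hamOn_eq_zero (h : C.Hfull = 0) (F : Finset (Fin n)) :
    minNonzeroEig (C.hamOn F) = 0 := by
  rw [le_antisymm (h ▸ C.hamOn_le_Hfull F) (C.hamOn_nonneg F), minNonzeroEig_zero]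

lemma L_pos_of_Hfull_ne_zero (h : C.Hfull ≠ 0) : 0 < C.L := by
  obtain ⟨p, -, -⟩ := Finset.exists_ne_zero_of_sum_ne_zero (C.Hfull_eq_sum_family ▸ h)
  exact (C.layer p).pos

lemma hasSpectralGap_indicesInside_seg {openBC : Bool} {t K : ℕ} {a : ℕ → ℕ}
    (ha : ∀ k < K, openBC = true → a k + t ≤ n)
    (hdisj : (Finset.range K : Set ℕ).PairwiseDisjoint fun k => seg (a k : Fin n) t) :
    HasSpectralGap (∑ p ∈ C.indicesInside (Finset.range K) fun k => seg (a k : Fin n) t, C.family p)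
      (C.localGap openBC t) :=
  C.hasSpectralGap_sum_indicesInside hdisj fun k hk => C.hasSpectralGap_hamOn_seg fun ho =>
    (Nat.add_le_add_right (Nat.mod_le _ _) t).trans (ha k (Finset.mem_range.mp hk) ho)

lemma localGap_le_of_mul_le {openBC : Bool} {t m : ℕ} (ht : 0 < t) (htn : 5 * t ≤ n)
    (hopen : openBC = true → C.Hbond ⟨n - 1, Nat.sub_one_lt (NeZero.ne n)⟩ = 0)
    (hH : C.Hfull ≠ 0) (hm : 0 < m) (hmt : m * (C.L + C.L) ≤ t / 4) :
    C.localGap openBC t ≤ 2 * C.gap + (C.g : ℝ) ^ 2 / (m : ℝ) ^ 2 := by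
  have hHnonneg : 0 ≤ C.Hfull := by
    rw [Hfull_eq_sum_family]
    exact sum_nonneg_of_isStarProjection C.isStarProjection_family
  obtain ⟨hγ, ψ, hψ0, hψ⟩ : 0 < C.gap ∧ ∃ ψ ≠ 0, C.Hfull ψ = (C.gap : ℂ) • ψ :=
    minNonzeroEig_pos_and_exists_eigenvector hHnonneg hH
  have hgap : HasSpectralGap C.Hfull C.gap := hasSpectralGap_minNonzeroEig hHnonneg
  obtain ⟨K, M, a, b, ha, hb, hadisj, hbdisj, hcover⟩ :=
    exists_alternating_segments (n := n) ht htn openBC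
  rw [Hfull_eq_sum_family] at hgap hψ
  refine le_two_mul_add_of_lightCone_subset C.isStarProjection_family C.card_not_commute_family_le
    C.layers hgap hγ (C.hasSpectralGap_indicesInside_seg (fun k hk _ => ha k hk) hadisj)
    (C.hasSpectralGap_indicesInside_seg hb hbdisj) (C.localGap_nonneg openBC t) hm hmt
    (fun d hd => C.lightCone_subset_indicesInside (fun i hi => ?_) hd) hψ0 hψ
  simp only [Finset.mem_range]
  refine hcover i fun ho hin => hi ?_
  rw [← hopen ho]
  congr 1
  ext
  exact Nat.eq_sub_of_add_eq hin

end ChainSetup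

theorem stmt_0_general {n : ℕ} [NeZero n] (C : ChainSetup n E)
    (t : ℕ) (ht1 : 8 * C.L < t) (ht2 : 5 * t ≤ n)
    (openBC : Bool)
    (hopen : openBC = true → C.Hbond ⟨n - 1, Nat.sub_one_lt (NeZero.ne n)⟩ = 0) :
    C.localGap openBC t ≤
      256 * (C.L : ℝ) ^ 2 * (C.g : ℝ) ^ 2 / (t : ℝ) ^ 2 + 2 * C.gap := by
  have ht : 0 < t := ht1.pos
  have hgap : 0 ≤ C.gap := minNonzeroEig_nonneg _
  by_cases hH : C.Hfull = 0
  · have hlocal := C.localGap_le (a := 0) (openBC := openBC) (t := t) fun _ => by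
      rw [Fin.val_zero, zero_add]
      lia
    rw [C.minNonzeroEig_hamOn_eq_zero hH] at hlocal
    exact hlocal.trans (by positivity)
  have hL := C.L_pos_of_Hfull_ne_zero hH
  set m := t / (8 * C.L)
  have hmpos : 0 < m := Nat.div_pos ht1.le (by lia)
  have hmt : m * (C.L + C.L) ≤ t / 4 := by
    rw [Nat.le_div_iff_mul_le (by lia)]
    calc m * (C.L + C.L) * 4 = m * (8 * C.L) := by ring
      _ ≤ t := Nat.div_mul_le_self t (8 * C.L)
  have htm : (t : ℝ) ≤ 16 * C.L * m := by
    have hround : t < m * (8 * C.L) + 8 * C.L := Nat.lt_div_mul_add (by lia)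
    have := Nat.mul_le_mul_right (8 * C.L) hmpos
    exact_mod_cast (show t ≤ 16 * C.L * m by linarith)
  have hratio : (C.g : ℝ) ^ 2 / (m : ℝ) ^ 2 ≤
      256 * (C.L : ℝ) ^ 2 * (C.g : ℝ) ^ 2 / (t : ℝ) ^ 2 := by
    rw [div_le_div_iff₀ (by positivity) (by positivity)]
    calc (C.g : ℝ) ^ 2 * (t : ℝ) ^ 2 ≤ (C.g : ℝ) ^ 2 * (16 * C.L * m) ^ 2 := by gcongr
      _ = 256 * (C.L : ℝ) ^ 2 * (C.g : ℝ) ^ 2 * (m : ℝ) ^ 2 := by ring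
  linarith [C.localGap_le_of_mul_le ht ht2 hopen hH hmpos hmt]

/-- for a frustration-free Hamiltonian on a chain of `n` qudits as in the
setup (noncommutation degree `g`, `L` commuting layers, spectral gap `γ`, local gaps
`γ(t)`), if `γ ≤ g²/4` then for every `t` with `8L² < t < n/5` one has
`γ(t) ≤ 10³·L²·g²/t² + 6γ`.  The flag `openBC` selects the open chain (where the last bond
interaction vanishes) or the closed chain. -/
theorem stmt_0 {n : ℕ} [NeZero n] (C : ChainSetup n E)
    (t : ℕ) (ht1 : 8 * C.L ^ 2 < t) (ht2 : 5 * t < n)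
    (openBC : Bool)
    (hopen : openBC = true → C.Hbond ⟨n - 1, by omega⟩ = 0)
    (hγ : C.gap ≤ (C.g : ℝ) ^ 2 / 4) :
    C.localGap openBC t ≤
      10 ^ 3 * (C.L : ℝ) ^ 2 * (C.g : ℝ) ^ 2 / (t : ℝ) ^ 2 + 6 * C.gap := by
  have hgap : 0 ≤ C.gap := minNonzeroEig_nonneg _
  have hL : 8 * C.L ≤ 8 * C.L ^ 2 := Nat.mul_le_mul_left 8 (Nat.le_self_pow two_ne_zero C.L)
  refine (stmt_0_general C t (hL.trans_lt ht1) ht2.le openBC hopen).trans ?_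
  gcongr <;> norm_num
end

section
/- (Converse to the detectability lemma.) Let H = Σ_{i,j} P_{ij} be a frustration-free Hamiltonian as in the setup, with detectability-lemma operator DL(H). Then for any unit vector ψ, ‖DL(H)ψ‖² ≥ 1 − 4·⟨ψ, Hψ⟩. -/
variable {E : Type*} [NormedAddCommGroup E] [InnerProductSpace ℂ E] [FiniteDimensional ℂ E]

/-- The detectability-lemma operator `DL(H) = ∏_{α=1}^{L} ∏_{i ∈ T_α} (1 − P_i)`:
the product of the complementary projectors, taken layer by layer. -/
noncomputable def DLop {ι : Type*} [Fintype ι] [DecidableEq ι] {L : ℕ}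
    (P : ι → (E →L[ℂ] E)) (layer : ι → Fin L)
    (hcomm : ∀ i j, layer i = layer j → Commute (P i) (P j)) : E →L[ℂ] E :=
  ((List.finRange L).map (fun α =>
    (Finset.univ.filter (fun i => layer i = α)).noncommProd (fun i => 1 - P i)
      (fun i hi j hj _ =>
        Commute.sub_left (Commute.one_left _)
          (Commute.sub_right (Commute.one_right _)
            (hcomm i j (by
              simp only [Finset.coe_filter, Set.mem_setOf_eq] at hi hj
              rw [hi.2, hj.2]))))) ).prod

/-!
If `P` is an orthogonal projection, then `(1 - P) x - y = (1 - P) (x - y) - P y` is a difference of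
orthogonal vectors, so replacing `x` by `(1 - P) x` increases `‖x - y‖²` by at most
`‖P y‖² = ⟪y, P y⟫`. Applying the projections one after the other to `x = ψ` with `y = 2ψ` gives
`‖Dψ - 2ψ‖² ≤ ‖ψ‖² + 4⟪ψ, Hψ⟫`, where `D` is the product of the `1 - P` and `H` the sum of the `P`.
The parallelogram law for `Dψ - ψ` and `ψ` bounds the left-hand side from below by
`2‖ψ‖² - ‖Dψ‖²`.
-/

section InnerProductSpace

variable {𝕜 F : Type*} [RCLike 𝕜] [SeminormedAddCommGroup F] [InnerProductSpace 𝕜 F]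

namespace SymmetricProjection

theorem inner_sub_apply_apply_eq_zero {T : F →ₗ[𝕜] F} (hT : T.IsSymmetricProjection) (x y : F) :
    inner 𝕜 (x - T x) (T y) = 0 := by
  have hTT : T (T x) = T x := LinearMap.congr_fun hT.isIdempotentElem x
  rw [← hT.isSymmetric, map_sub, hTT, sub_self, inner_zero_left]

theorem re_inner_apply_eq_norm_apply_sq {T : F →ₗ[𝕜] F} (hT : T.IsSymmetricProjection) (x : F) :
    RCLike.re (inner 𝕜 x (T x)) = ‖T x‖ ^ 2 := by
  have h_orth := inner_sub_apply_apply_eq_zero hT x x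
  rw [inner_sub_left, sub_eq_zero] at h_orth
  rw [h_orth, inner_self_eq_norm_sq]

theorem norm_sub_apply_le {T : F →ₗ[𝕜] F} (hT : T.IsSymmetricProjection) (x : F) :
    ‖x - T x‖ ≤ ‖x‖ := by
  have h_pythagoras := norm_add_sq_eq_norm_sq_add_norm_sq_of_inner_eq_zero _ _
    (inner_sub_apply_apply_eq_zero hT x x)
  rw [sub_add_cancel] at h_pythagoras
  exact le_of_sq_le_sq (by nlinarith [mul_self_nonneg ‖T x‖]) (norm_nonneg x)

theorem norm_sub_apply_sub_sq_le {T : F →ₗ[𝕜] F} (hT : T.IsSymmetricProjection) (x y : F) :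
    ‖x - T x - y‖ ^ 2 ≤ ‖x - y‖ ^ 2 + RCLike.re (inner 𝕜 y (T y)) := by
  have h_split : x - T x - y = (x - y - T (x - y)) - T y := by rw [map_sub]; abel
  calc ‖x - T x - y‖ ^ 2
      = ‖x - y - T (x - y)‖ ^ 2 + ‖T y‖ ^ 2 := by
        rw [h_split, norm_sub_sq (𝕜 := 𝕜), inner_sub_apply_apply_eq_zero hT]
        simp
    _ ≤ ‖x - y‖ ^ 2 + RCLike.re (inner 𝕜 y (T y)) := by
        rw [re_inner_apply_eq_norm_apply_sq hT]
        gcongr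
        exact norm_sub_apply_le hT _

end SymmetricProjection

theorem norm_prod_one_sub_apply_sub_sq_le (l : List (F →L[𝕜] F))
    (hl : ∀ P ∈ l, (P : F →ₗ[𝕜] F).IsSymmetricProjection) (x y : F) :
    ‖((l.map (1 - ·)).prod : F →L[𝕜] F) x - y‖ ^ 2 ≤
      ‖x - y‖ ^ 2 + RCLike.re (inner 𝕜 y (l.sum y)) := by
  induction l with
  | nil => simp
  | cons P l ih =>
    rw [List.forall_mem_cons] at hl
    have h_step :=
      SymmetricProjection.norm_sub_apply_sub_sq_le hl.1 (((l.map (1 - ·)).prod : F →L[𝕜] F) x) y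
    simp only [List.map_cons, List.prod_cons, List.sum_cons, mul_apply_eq_comp,
      sub_apply, one_apply_eq_self, add_apply, inner_add_right, map_add,
      ContinuousLinearMap.coe_coe] at h_step ⊢
    linarith [ih hl.2]

theorem two_mul_norm_sq_sub_le_norm_sub_two_smul_sq (x y : F) :
    2 * ‖x‖ ^ 2 - ‖y‖ ^ 2 ≤ ‖y - (2 : 𝕜) • x‖ ^ 2 := by
  have h_parallelogram := parallelogram_law_with_norm 𝕜 (y - x) x
  rw [sub_add_cancel, sub_sub, ← two_smul 𝕜 x] at h_parallelogram
  nlinarith [sq_nonneg ‖y - x‖]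

theorem stmt_6_general (l : List (F →L[𝕜] F))
    (hl : ∀ P ∈ l, (P : F →ₗ[𝕜] F).IsSymmetricProjection) (ψ : F) :
    ‖ψ‖ ^ 2 - 4 * RCLike.re (inner 𝕜 ψ (l.sum ψ)) ≤ ‖((l.map (1 - ·)).prod : F →L[𝕜] F) ψ‖ ^ 2 := by
  have h_upper := norm_prod_one_sub_apply_sub_sq_le l hl ψ ((2 : 𝕜) • ψ)
  have h_lower :=
    two_mul_norm_sq_sub_le_norm_sub_two_smul_sq (𝕜 := 𝕜) ψ (((l.map (1 - ·)).prod : F →L[𝕜] F) ψ)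
  have h_start : ‖ψ - (2 : 𝕜) • ψ‖ = ‖ψ‖ := by
    rw [two_smul, sub_add_cancel_left, norm_neg]
  have h_energy : RCLike.re (inner 𝕜 ((2 : 𝕜) • ψ) (l.sum ((2 : 𝕜) • ψ))) =
      4 * RCLike.re (inner 𝕜 ψ (l.sum ψ)) := by
    simp only [two_smul, map_add, inner_add_left, inner_add_right]
    ring
  rw [h_start, h_energy] at h_upper
  linarith

end InnerProductSpace

theorem IsProjector.isSymmetricProjection {P : E →L[ℂ] E} (hP : IsProjector P) :
    (P : E →ₗ[ℂ] E).IsSymmetricProjection :=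
  ContinuousLinearMap.isStarProjection_iff_isSymmetricProjection.1 ⟨hP.2, hP.1⟩

theorem noncommProd_eq_prod_map_toList {ι M : Type*} [Monoid M] (s : Finset ι) (f : ι → M)
    (comm : (s : Set ι).Pairwise (Function.onFun Commute f)) :
    s.noncommProd f comm = (s.toList.map f).prod := by
  classical
  simpa using Finset.noncommProd_toFinset s.toList f (by simpa using comm) s.nodup_toList

section LayerEnumeration

variable {ι : Type*} [Fintype ι] {L : ℕ}

/-- The indices listed layer by layer, as `DLop` multiplies the corresponding factors. The order
inside a layer is an arbitrary choice. -/
noncomputable def layerEnumeration (layer : ι → Fin L) : List ι :=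
  (List.finRange L).flatMap fun α => (Finset.univ.filter (fun i => layer i = α)).toList

theorem layerEnumeration_perm_univ_toList (layer : ι → Fin L) :
    (layerEnumeration layer).Perm Finset.univ.toList := by
  have h_nodup : (layerEnumeration layer).Nodup := by
    refine List.nodup_flatMap.2 ⟨fun _ _ => Finset.nodup_toList _, ?_⟩
    refine (List.nodup_finRange L).imp fun h_ne i hi hj => h_ne ?_
    simp only [Finset.mem_toList, Finset.mem_filter, Finset.mem_univ, true_and] at hi hj
    exact hi.symm.trans hj
  refine (List.perm_ext_iff_of_nodup h_nodup (Finset.nodup_toList _)).2 fun i => ?_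
  simp [layerEnumeration]

theorem sum_map_layerEnumeration {M : Type*} [AddCommMonoid M] (layer : ι → Fin L) (f : ι → M) :
    ((layerEnumeration layer).map f).sum = ∑ i, f i :=
  ((layerEnumeration_perm_univ_toList layer).map f).sum_eq.trans (Finset.sum_map_toList _ f)

theorem DLop_eq_prod_map_layerEnumeration {F : Type*} [NormedAddCommGroup F]
    [InnerProductSpace ℂ F] [DecidableEq ι] (P : ι → (F →L[ℂ] F)) (layer : ι → Fin L)
    (hcomm : ∀ i j, layer i = layer j → Commute (P i) (P j)) :
    DLop P layer hcomm = (((layerEnumeration layer).map P).map (1 - ·)).prod := by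
  rw [DLop, layerEnumeration, List.map_map, List.map_flatMap, List.flatMap, List.prod_flatten,
    List.map_map]
  congr 1
  exact List.map_congr_left fun _ _ => noncommProd_eq_prod_map_toList _ _ _

end LayerEnumeration

/-- Converse to the detectability lemma: for a frustration-free Hamiltonian
`H = Σᵢ Pᵢ` as in the setup (orthogonal projectors partitioned into layers of pairwise
commuting terms, nonzero common ground space), and any unit vector `ψ`,
`‖DL(H)ψ‖² ≥ 1 − 4·⟨ψ, Hψ⟩`. -/
theorem stmt_6 {ι : Type*} [Fintype ι] [DecidableEq ι] {L : ℕ}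
    (P : ι → (E →L[ℂ] E)) (hproj : ∀ i, IsProjector (P i))
    (layer : ι → Fin L)
    (hcomm : ∀ i j, layer i = layer j → Commute (P i) (P j))
    (g : ℕ) (hgbound : ∀ i, Nat.card {j : ι // j ≠ i ∧ ¬ Commute (P i) (P j)} ≤ g)
    (hff : ∃ v : E, v ≠ 0 ∧ ∀ i, P i v = 0)
    (ψ : E) (hψ : ‖ψ‖ = 1) :
    1 - 4 * (inner ℂ ψ ((∑ i, P i) ψ) : ℂ).re ≤ ‖DLop P layer hcomm ψ‖ ^ 2 := by
  have h_proj : ∀ T ∈ (layerEnumeration layer).map P, (T : E →ₗ[ℂ] E).IsSymmetricProjection :=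
    List.forall_mem_map.2 fun i _ => (hproj i).isSymmetricProjection
  simpa only [hψ, one_pow, sum_map_layerEnumeration, DLop_eq_prod_map_layerEnumeration,
    RCLike.re_eq_complex_re] using stmt_6_general _ h_proj ψ
end
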